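/- Fix ε > 0 and an integer c ≥ 1. There exists a constant C′, depending only on ε and c, such that the following holds. For every integer b ≥ 1, every finite alphabet Σ, and every key set X ⊆ Σ^c with |X| = m, if g = 2^b satisfies n := 2g > 2(1+ε)m, and h_1, h_2 : Σ^c → F₂^b ≅ [g] are two independent random simple tabulation hash functions, then with probability at least 1 − C′·n^{−1/3} (over the random tables) there exists a map σ : X → {1,2} such that the map x ↦ (h_{σ(x)}(x), σ(x)) from X to [g]×{1,2} is injective; that is, the keys of X can be placed in two tables of size g by cuckoo hashing. -/

import Mathlib

/-!
Each key `x` is an edge joining `h 0 x` to `h 1 x` in a bipartite graph with `g = 2 ^ b` vertices on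
each side. If the keys cannot be placed, a minimal set `S` violating Hall's condition has more edges
than vertices, every edge of `S` can be continued at both ends, and no part of `S` is a union of
cycles that are components of `S` (`exists_obstruction`). Under fully random hashing such an `S` is
excluded by the union bound over trails both of whose ends close up to an inner vertex
(`Good.two_cycles`): `M` distinct keys subject to `M + 1` collisions contribute about
`m ^ M / g ^ (M + 1) ≤ q ^ M / g`, where `m = #X` and `q = 1 / (1 + ε)`.

Under simple tabulation a hash value is a linear function of the vector `phi x` over `F₂`, and
linearly independent constraints are as unlikely as under full randomness (`card_solutions_le`). So
the difficulty is dependence between the keys of a trail. A relation (a set of keys with zero sum)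
has an even number of terms, at least four, and each of its keys is covered: every character occurs
in the same position in another key of the relation. By a case of Finner's inequality, demanding
that `β` keys of a tuple be covered costs a factor of about `m ^ (β / 2)` in the number of tuples
(`card_cov_le`). Hence a relation makes up for the constraints lost to dependence, except in one
case: a trail that becomes dependent with its last key, whose relation consists of its first two and
its last two keys, a `Window`.

Continue a window by an edge. If the trail gets longer with an independent tail, the end of this
tail must later close up or meet a second relation, and both are unlikely (`Good.not_closing`,
`Good.not_two_relations`). Otherwise the continuation is a window of the same length, and it is
determined by the old one, because the new key has vector sum
`phi (x 1) + phi (x 2) + phi (x (L - 1))` (`Good.step`). So rotating a window forever in both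
directions sweeps out cycles that form components of `S`, which is impossible
(`Obstruction.no_rotation`). Without windows all trails are independent, and a longest trail gives
two cycles or a cycle that is a component of `S` (`Good.not_obstruction`).

When two relations share two colliding keys, the count of tuples uses that the sum of these two keys
has at most `D = g ^ (2 / 3)` representations as the sum of two keys. Sums with more representations
are heavy: there are `O(m ^ 2 / D ^ 2)` of them, so with probability `1 - O(m ^ 2 / (D ^ 2 * g))` no
colliding pair of keys has a heavy sum (`prob_heavy_le`). Either exceptional event has probability
`O(g ^ (-1 / 3))`, which gives the exponent in the theorem; all series over the number `M` of keys
converge because `q < 1`.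
-/

/-- Simple tabulation: the hash of `x` is the XOR (sum over `F₂`) of the table entries
`T i (x i)`. -/
def simpleTab {c b : ℕ} {A : Type*} (T : Fin c → A → (Fin b → ZMod 2)) (x : Fin c → A) :
    Fin b → ZMod 2 := ∑ i, T i (x i)

set_option linter.unusedSectionVars false

open Finset

/-! ### Counting tuples of keys with covered indices -/

section Counting

variable {ι A : Type*} [Fintype ι] [DecidableEq ι] [Fintype A] [DecidableEq A]

/-- The `ℓ²` norm for indices in `B` and the `ℓ¹` norm (of a nonnegative function) for the others. -/
noncomputable def nrm (B : Finset ι) (l : ι) {α : Type*} [Fintype α] (f : α → ℝ) : ℝ :=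
  if l ∈ B then √(∑ a, f a ^ 2) else ∑ a, f a

lemma nrm_nonneg (B : Finset ι) (l : ι) {α : Type*} [Fintype α] (f : α → ℝ) (hf : ∀ a, 0 ≤ f a) :
    0 ≤ nrm B l f := by
  unfold nrm
  split_ifs
  · positivity
  · exact sum_nonneg fun a _ => hf a

lemma le_nrm (B : Finset ι) (l : ι) {α : Type*} [Fintype α] (f : α → ℝ) (hf : ∀ a, 0 ≤ f a)
    (a : α) : f a ≤ nrm B l f := by
  unfold nrm
  split_ifs
  · apply Real.le_sqrt_of_sq_le
    exact single_le_sum (f := fun a => f a ^ 2) (fun a _ => sq_nonneg _) (mem_univ a)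
  · exact single_le_sum (f := f) (fun a _ => hf a) (mem_univ a)

/-- Hölder's inequality for one class `q` of indices forced to share a value: the weights `1/2`
(indices in `B`) and `1` (the others) have total at least one on `q`. -/
lemma class_le (B : Finset ι) {α : Type*} [Fintype α] (f : ι → α → ℝ)
    (hf : ∀ l a, 0 ≤ f l a) (q : Finset ι)
    (hq : (∃ l ∈ q, l ∉ B) ∨ (∃ l ∈ q, ∃ l' ∈ q, l' ≠ l ∧ l ∈ B ∧ l' ∈ B)) :
    ∑ a, ∏ l ∈ q, f l a ≤ ∏ l ∈ q, nrm B l (f l) := by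
  rcases hq with ⟨l, hl, hlB⟩ | ⟨l, hl, l', hl', hne, hlB, hlB'⟩
  · calc ∑ a, ∏ k ∈ q, f k a
        = ∑ a, f l a * ∏ k ∈ q.erase l, f k a :=
          sum_congr rfl fun a _ => (mul_prod_erase q (fun k => f k a) hl).symm
      _ ≤ ∑ a, f l a * ∏ k ∈ q.erase l, nrm B k (f k) := by
          gcongr with a _ k _
          · exact hf l a
          · exact fun k _ => hf k a
          · exact le_nrm B k (f k) (hf k) a
      _ = nrm B l (f l) * ∏ k ∈ q.erase l, nrm B k (f k) := by
          rw [← sum_mul, nrm, if_neg hlB]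
      _ = _ := mul_prod_erase q (fun k => nrm B k (f k)) hl
  · have hl'' : l' ∈ q.erase l := mem_erase.2 ⟨hne, hl'⟩
    calc ∑ a, ∏ k ∈ q, f k a
        = ∑ a, (f l a * f l' a) * ∏ k ∈ (q.erase l).erase l', f k a :=
          sum_congr rfl fun a _ => by
            rw [← mul_prod_erase q (fun k => f k a) hl,
              ← mul_prod_erase _ (fun k => f k a) hl'', mul_assoc]
      _ ≤ ∑ a, (f l a * f l' a) * ∏ k ∈ (q.erase l).erase l', nrm B k (f k) := by
          gcongr with a _ k _
          · exact mul_nonneg (hf l a) (hf l' a)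
          · exact fun k _ => hf k a
          · exact le_nrm B k (f k) (hf k) a
      _ ≤ (nrm B l (f l) * nrm B l' (f l')) * ∏ k ∈ (q.erase l).erase l', nrm B k (f k) := by
          rw [← sum_mul]
          gcongr
          · exact prod_nonneg fun k _ => nrm_nonneg B k (f k) (hf k)
          · rw [nrm, if_pos hlB, nrm, if_pos hlB']
            exact Real.sum_mul_le_sqrt_mul_sqrt univ (f l) (f l')
      _ = _ := by
          rw [← mul_prod_erase q (fun k => nrm B k (f k)) hl,
              ← mul_prod_erase _ (fun k => nrm B k (f k)) hl'', mul_assoc]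

open Classical in
/-- The one-position case of the counting inequality: every index of `B` is identified with some
other index, so each class of the generated equivalence relation has total weight at least one. -/
lemma finner_one (B : Finset ι) (r : ι → ι → Prop) (hr : ∀ l ∈ B, ∃ l', l' ≠ l ∧ r l l')
    (f : ι → A → ℝ) (hf : ∀ l a, 0 ≤ f l a) :
    ∑ σ : ι → A with ∀ l l', r l l' → σ l = σ l', ∏ l, f l (σ l) ≤ ∏ l, nrm B l (f l) := by
  have hfin : Finite (Quot r) := inferInstance
  let _ : Fintype (Quot r) := Fintype.ofFinite _
  calc ∑ σ : ι → A with ∀ l l', r l l' → σ l = σ l', ∏ l, f l (σ l)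
      ≤ ∑ σ ∈ (univ : Finset (Quot r → A)).image (fun τ l => τ (Quot.mk r l)),
          ∏ l, f l (σ l) := by
        apply sum_le_sum_of_subset_of_nonneg
        · intro σ hσ
          rw [mem_filter] at hσ
          exact mem_image.2 ⟨Quot.lift σ hσ.2, mem_univ _, rfl⟩
        · intro σ _ _
          exact prod_nonneg fun l _ => hf l _
    _ = ∑ τ : Quot r → A, ∏ l, f l (τ (Quot.mk r l)) := by
        rw [sum_image]
        intro τ _ τ' _ h
        funext q
        induction q using Quot.ind with
        | mk l => exact congrFun h l
    _ = ∑ τ : Quot r → A, ∏ q, ∏ l with Quot.mk r l = q, f l (τ q) := by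
        refine sum_congr rfl fun τ _ => ?_
        rw [← prod_fiberwise univ (fun l => Quot.mk r l)]
        refine prod_congr rfl fun q _ => prod_congr rfl fun l hl => ?_
        rw [(mem_filter.1 hl).2]
    _ = ∏ q, ∑ a, ∏ l with Quot.mk r l = q, f l a := by
        rw [prod_univ_sum, Fintype.piFinset_univ]
    _ ≤ ∏ q : Quot r, ∏ l with Quot.mk r l = q, nrm B l (f l) := by
        refine prod_le_prod (fun q _ => sum_nonneg fun a _ => prod_nonneg fun l _ => hf l a)
          fun q _ => class_le B f hf _ ?_
        induction q using Quot.ind with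
        | mk l =>
          by_cases hl : l ∈ B
          · obtain ⟨l', hne, hll⟩ := hr l hl
            have hmem : l' ∈ ({k | Quot.mk r k = Quot.mk r l} : Finset ι) := by
              rw [mem_filter]
              exact ⟨mem_univ _, (Quot.sound hll).symm⟩
            by_cases hl' : l' ∈ B
            · exact Or.inr ⟨l, by simp, l', hmem, hne, hl, hl'⟩
            · exact Or.inl ⟨l', hmem, hl'⟩
          · exact Or.inl ⟨l, by simp, hl⟩
    _ = _ := prod_fiberwise univ (fun l => Quot.mk r l) _

lemma nrm_cons (B : Finset ι) (l : ι) (c : ℕ) (f : (Fin (c + 1) → A) → ℝ) :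
    nrm B l (fun a => nrm B l fun y : Fin c → A => f (Fin.cons a y)) = nrm B l f := by
  have key : ∀ F : (Fin (c + 1) → A) → ℝ, ∑ a, ∑ y : Fin c → A, F (Fin.cons a y) = ∑ z, F z := by
    intro F
    rw [← Fintype.sum_prod_type']
    exact Fintype.sum_equiv (Fin.consEquiv fun _ => A) _ _ fun _ => rfl
  unfold nrm
  split_ifs
  · rw [← key fun z => f z ^ 2]
    congr 1
    refine sum_congr rfl fun a _ => ?_
    rw [Real.sq_sqrt (by positivity)]
  · exact key f

/-- Regrouping a tuple of keys into the tuple of first characters and the tuple of the rest. -/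
def consTuple (ι A : Type*) (c : ℕ) : (ι → A) × (ι → Fin c → A) ≃ (ι → Fin (c + 1) → A) where
  toFun p l := Fin.cons (p.1 l) (p.2 l)
  invFun x := (fun l => x l 0, fun l => Fin.tail (x l))
  left_inv p := by simp
  right_inv x := by funext l; simp

open Classical in
/-- A case of Finner's inequality: if in every position `i` each index of `B` has its character
identified by `r i` with that of another index, then the indices of `B` contribute only their
`ℓ²` norms. It follows from the one-position case by induction on the number of positions. -/
lemma finner (B : Finset ι) (c : ℕ) (r : Fin c → ι → ι → Prop)
    (hr : ∀ i, ∀ l ∈ B, ∃ l', l' ≠ l ∧ r i l l')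
    (f : ι → (Fin c → A) → ℝ) (hf : ∀ l a, 0 ≤ f l a) :
    ∑ x : ι → Fin c → A with ∀ i l l', r i l l' → x l i = x l' i, ∏ l, f l (x l)
      ≤ ∏ l, nrm B l (f l) := by
  induction c with
  | zero =>
    calc _ ≤ ∑ x : ι → Fin 0 → A, ∏ l, f l (x l) :=
          sum_le_sum_of_subset_of_nonneg (filter_subset _ _)
            fun x _ _ => prod_nonneg fun l _ => hf l _
      _ = ∏ l, f l default := by
          rw [Fintype.sum_unique]; rfl
      _ ≤ _ := prod_le_prod (fun l _ => hf l _) fun l _ => le_nrm B l _ (hf l) _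
  | succ c ih =>
    have hcond : ∀ (σ : ι → A) (y : ι → Fin c → A),
        (∀ i l l', r i l l' → consTuple ι A c (σ, y) l i = consTuple ι A c (σ, y) l' i) ↔
        (∀ l l', r 0 l l' → σ l = σ l') ∧ (∀ i l l', r (Fin.succ i) l l' → y l i = y l' i) := by
      intro σ y
      constructor
      · intro h
        exact ⟨fun l l' hl => by simpa [consTuple] using h 0 l l' hl,
          fun i l l' hl => by simpa [consTuple] using h i.succ l l' hl⟩
      · rintro ⟨h0, h1⟩ i l l' hl
        induction i using Fin.cases with
        | zero => simpa [consTuple] using h0 l l' hl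
        | succ i => simpa [consTuple] using h1 i l l' hl
    calc _ = ∑ σ : ι → A with ∀ l l', r 0 l l' → σ l = σ l',
            ∑ y : ι → Fin c → A with ∀ i l l', r (Fin.succ i) l l' → y l i = y l' i,
              ∏ l, f l (Fin.cons (σ l) (y l)) := by
          simp only [sum_filter]
          rw [← (consTuple ι A c).sum_comp, Fintype.sum_prod_type]
          refine sum_congr rfl fun σ _ => ?_
          simp only [hcond]
          by_cases h : ∀ l l', r 0 l l' → σ l = σ l'
          · rw [if_pos h]
            exact sum_congr rfl fun y _ => if_congr (and_iff_right h) rfl rfl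
          · rw [if_neg h]
            exact sum_eq_zero fun y _ => if_neg fun hh => h hh.1
      _ ≤ ∑ σ : ι → A with ∀ l l', r 0 l l' → σ l = σ l',
            ∏ l, nrm B l (fun y => f l (Fin.cons (σ l) y)) :=
          sum_le_sum fun σ _ => ih (fun i => r i.succ) (fun i => hr i.succ)
            (fun l y => f l (Fin.cons (σ l) y)) fun l a => hf l _
      _ ≤ ∏ l, nrm B l (fun a => nrm B l (fun y => f l (Fin.cons a y))) :=
          finner_one B (r 0) (hr 0) (fun l a => nrm B l (fun y => f l (Fin.cons a y)))
            fun l a => nrm_nonneg B l _ fun _ => hf l _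
      _ = _ := prod_congr rfl fun l _ => nrm_cons B l c (f l)

/-- The indices of a tuple of keys all of whose characters also occur, in the same position, in
another key of the tuple. -/
def cov {c : ℕ} (x : ι → Fin c → A) : Finset ι :=
  {l | ∀ i, ∃ l', l' ≠ l ∧ x l' i = x l i}

open Classical in
/-- Among the `m ^ |ι|` tuples of keys of `X`, those with at least `β` covered indices are
fewer by a factor of about `m ^ (β / 2)`. -/
lemma card_cov_le {c : ℕ} (X : Finset (Fin c → A)) (β : ℕ) :
    (#{x : ι → Fin c → A | (∀ l, x l ∈ X) ∧ β ≤ #(cov x)} : ℝ) ≤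
      (Fintype.card ι : ℝ) ^ (β * (c + 1)) *
        ((#X : ℝ) ^ (Fintype.card ι - β) * √(#X : ℝ) ^ β) := by
  let P := (Fin β → ι) × (Fin β → Fin c → ι)
  let F : P → Finset (ι → Fin c → A) := fun p =>
    {x | (∀ l, x l ∈ X) ∧ Function.Injective p.1 ∧ (∀ k i, p.2 k i ≠ p.1 k) ∧
      ∀ k i, x (p.1 k) i = x (p.2 k i) i}
  have hsub : ({x : ι → Fin c → A | (∀ l, x l ∈ X) ∧ β ≤ #(cov x)} : Finset _) ⊆
      (univ : Finset P).biUnion F := by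
    intro x hx
    rw [mem_filter] at hx
    obtain ⟨-, hX, hβ⟩ := hx
    obtain ⟨B, hB, hBc⟩ := exists_subset_card_eq hβ
    let b := B.equivFinOfCardEq hBc
    have hcov : ∀ k : Fin β, ∀ i, ∃ l', l' ≠ (b.symm k : ι) ∧ x l' i = x (b.symm k : ι) i := by
      intro k
      have := hB (b.symm k).2
      simpa [cov] using this
    choose π hπ hπ' using hcov
    refine mem_biUnion.2 ⟨(fun k => (b.symm k : ι), π), mem_univ _, ?_⟩
    simp only [F, mem_filter, mem_univ, true_and]
    exact ⟨hX, fun k k' h => b.symm.injective (Subtype.ext h), hπ, fun k i => (hπ' k i).symm⟩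
  have hF : ∀ p, (#(F p) : ℝ) ≤ (#X : ℝ) ^ (Fintype.card ι - β) * √(#X : ℝ) ^ β := by
    intro p
    by_cases hp : Function.Injective p.1 ∧ ∀ k i, p.2 k i ≠ p.1 k
    · let B : Finset ι := univ.image p.1
      have hBc : #B = β := by rw [card_image_of_injective _ hp.1]; simp
      obtain ⟨r, hrd⟩ : ∃ r : Fin c → ι → ι → Prop, ∀ i l l',
          r i l l' ↔ ∃ k, l = p.1 k ∧ l' = p.2 k i := ⟨_, fun _ _ _ => Iff.rfl⟩
      have h := finner B c r
        (by
          intro i l hl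
          obtain ⟨k, -, rfl⟩ := mem_image.1 hl
          exact ⟨p.2 k i, hp.2 k i, (hrd _ _ _).2 ⟨k, rfl, rfl⟩⟩)
        (fun _ y => if y ∈ X then (1 : ℝ) else 0) (fun _ y => by positivity)
      have hn : ∀ l, nrm B l (fun y => if y ∈ X then (1 : ℝ) else 0) =
          if l ∈ B then √(#X : ℝ) else #X := by
        intro l
        unfold nrm
        simp
      refine le_trans ?_ (h.trans (le_of_eq ?_))
      · rw [card_eq_sum_ones, Nat.cast_sum]
        refine le_trans (le_of_eq ?_) (sum_le_sum_of_subset_of_nonneg (s := F p) ?_ ?_)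
        · refine sum_congr rfl fun x hx => ?_
          have := (mem_filter.1 hx).2.1
          simp [this]
        · intro x hx
          have := (mem_filter.1 hx).2.2.2.2
          rw [mem_filter]
          refine ⟨mem_univ _, ?_⟩
          intro i l l' hl
          obtain ⟨k, rfl, rfl⟩ := (hrd _ _ _).1 hl
          exact this k i
        · intro x _ _
          positivity
      · simp only [hn]
        rw [prod_ite, prod_const, prod_const, mul_comm]
        congr 2
        · rw [filter_not, card_sdiff_of_subset (filter_subset _ _)]
          simp [hBc]
        · simp [hBc]
    · have : F p = ∅ := by
        apply filter_eq_empty_iff.2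
        intro x _ hx
        exact hp ⟨hx.2.1, hx.2.2.1⟩
      rw [this]
      simp only [card_empty, Nat.cast_zero]
      positivity
  calc _ ≤ (#((univ : Finset P).biUnion F) : ℝ) := by exact_mod_cast card_le_card hsub
    _ ≤ ∑ p : P, (#(F p) : ℝ) := by exact_mod_cast card_biUnion_le
    _ ≤ ∑ p : P, (#X : ℝ) ^ (Fintype.card ι - β) * √(#X : ℝ) ^ β := sum_le_sum fun p _ => hF p
    _ = _ := by
        rw [sum_const, nsmul_eq_mul, card_univ]
        congr 1
        simp only [P, Fintype.card_prod, Fintype.card_fun, Fintype.card_fin]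
        push_cast
        rw [← pow_mul, ← pow_add]
        congr 1
        ring

end Counting

/-! ### Linear algebra over `F₂` -/

section Linear

variable {c : ℕ} {A : Type*} [Fintype A] [DecidableEq A]

/-- The vector of a key: the sum over the positions of the unit vectors of its characters. A
simple tabulation hash is the value of the linear map given by the tables at this vector. -/
def phi (x : Fin c → A) : Fin c → A → ZMod 2 := fun i a => if x i = a then 1 else 0

/-- Linear independence over `F₂` of the vectors `v l`, `l ∈ s`: no nonempty subfamily has
sum zero. -/
def Ind {V : Type*} [AddCommMonoid V] (v : ℕ → V) (s : Finset ℕ) : Prop :=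
  ∀ S ⊆ s, ∑ l ∈ S, v l = 0 → S = ∅

lemma Ind.mono {V : Type*} [AddCommMonoid V] {v : ℕ → V} {s t : Finset ℕ} (h : Ind v t)
    (hst : s ⊆ t) : Ind v s := fun S hS => h S (hS.trans hst)

lemma zmod2_eq {a : ZMod 2} (h : a ≠ 0) : a = 1 := by
  revert a; decide

lemma add_eq_zero_two {V : Type*} [AddCommGroup V] [Module (ZMod 2) V] {u v : V} :
    u + v = 0 ↔ u = v := by
  rw [add_eq_zero_iff_eq_neg, ZModModule.neg_eq_self]

lemma add_self_two {V : Type*} [AddCommGroup V] [Module (ZMod 2) V] (u : V) : u + u = 0 :=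
  add_eq_zero_two.2 rfl

lemma Ind.exists_functional {V : Type*} [AddCommGroup V] [Module (ZMod 2) V] {v : ℕ → V}
    {s : Finset ℕ} (h : Ind v s) (Z : ℕ → ZMod 2) :
    ∃ f : V →ₗ[ZMod 2] ZMod 2, ∀ l ∈ s, f (v l) = Z l := by
  have hli : LinearIndependent (ZMod 2) (fun l : s => v l) := by
    have : LinearIndepOn (ZMod 2) v (s : Set ℕ) := by
      rw [linearIndepOn_finset_iff]
      intro f hf l hl
      by_contra hne
      have h0 : ∑ l ∈ s with f l ≠ 0, v l = 0 := by
        rw [sum_filter]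
        refine Eq.trans (sum_congr rfl fun k _ => ?_) hf
        split_ifs with hk
        · rw [zmod2_eq hk, one_smul]
        · rw [not_not.1 hk, zero_smul]
      have := h _ (filter_subset _ _) h0
      exact (eq_empty_iff_forall_notMem.1 this l) (mem_filter.2 ⟨hl, hne⟩)
    exact this
  let g := (Module.Basis.span hli).constr (ZMod 2) (fun l => Z l)
  obtain ⟨f, hf⟩ := LinearMap.exists_extend g
  refine ⟨f, fun l hl => ?_⟩
  have h1 := (Module.Basis.span hli).constr_basis (ZMod 2) (fun l : s => Z l) ⟨l, hl⟩
  have h2 : ((Module.Basis.span hli) ⟨l, hl⟩ : V) = v l :=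
    congrArg Subtype.val (Module.Basis.span_apply hli ⟨l, hl⟩)
  rw [← h2, ← h1]
  exact congrArg (fun F => F ((Module.Basis.span hli) ⟨l, hl⟩)) hf

/-- Independence from a triangular system of functionals. -/
lemma ind_of_triangular {V : Type*} [AddCommGroup V] [Module (ZMod 2) V] (w : ℕ → V) (n : ℕ)
    (h : ∀ k < n, ∃ f : V →ₗ[ZMod 2] ZMod 2, f (w k) ≠ 0 ∧ ∀ m < k, f (w m) = 0) :
    Ind w (range n) := by
  intro S hS h0
  by_contra hne
  obtain ⟨k, hk, hmax⟩ := S.exists_max_image id (nonempty_iff_ne_empty.2 hne)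
  obtain ⟨f, hf, hf0⟩ := h k (mem_range.1 (hS hk))
  apply hf
  have := congrArg f h0
  rw [map_sum, map_zero, sum_eq_single_of_mem k hk] at this
  · exact this
  · intro m hm hmk
    exact hf0 m (lt_of_le_of_ne (hmax m hm) hmk)

/-- In a family of keys with zero sum, every character of a member occurs in the same position in
another member. -/
lemma rel_cover {ι : Type*} {x : ι → Fin c → A} {R : Finset ι} (h : ∑ l ∈ R, phi (x l) = 0)
    {l : ι} (hl : l ∈ R) (i : Fin c) : ∃ l' ∈ R, l' ≠ l ∧ x l' i = x l i := by
  by_contra hcon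
  push Not at hcon
  have := congrFun (congrFun h i) (x l i)
  rw [Finset.sum_apply, Finset.sum_apply, sum_eq_single_of_mem l hl] at this
  · simp [phi] at this
  · intro l' hl' hne
    simp [phi, hcon l' hl' hne]

lemma rel_even (hc : 1 ≤ c) {x : ℕ → Fin c → A} {R : Finset ℕ} (h : ∑ l ∈ R, phi (x l) = 0) :
    Even #R := by
  have : ∑ a, (∑ l ∈ R, phi (x l)) ⟨0, hc⟩ a = (#R : ZMod 2) := by
    simp only [Finset.sum_apply]
    rw [sum_comm]
    simp [phi]
  rw [h] at this
  simp only [Pi.zero_apply, sum_const_zero] at this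
  exact (ZMod.natCast_eq_zero_iff_even).1 this.symm

lemma rel_four (hc : 1 ≤ c) {x : ℕ → Fin c → A} {R : Finset ℕ} (h : ∑ l ∈ R, phi (x l) = 0)
    (hx : Set.InjOn x R) (hR : R.Nonempty) : 4 ≤ #R := by
  have hev := rel_even hc h
  have hpos := hR.card_pos
  by_contra hlt
  have h2 : #R = 2 := by
    obtain ⟨k, hk⟩ := hev
    omega
  obtain ⟨l, l', hne, rfl⟩ := card_eq_two.1 h2
  apply hne
  apply hx (by simp) (by simp)
  funext i
  obtain ⟨k, hk, hkl, hki⟩ := rel_cover h (l := l) (by simp) i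
  have : k = l' := by simpa [hkl] using hk
  rw [← this, hki]

/-- The difference vector of two keys, placed in the block of the hash function `p`: it is
annihilated by the tables if and only if the two keys collide under that function. -/
def cvec (p : Fin 2) (u : Fin c → A → ZMod 2) : Fin 2 → Fin c → A → ZMod 2 := Pi.single p u

/-- The linear map defined by the tables of both hash functions. -/
def hfull {b : ℕ} (T : Fin 2 → Fin c → A → (Fin b → ZMod 2)) (w : Fin 2 → Fin c → A → ZMod 2) :
    Fin b → ZMod 2 := ∑ h, ∑ i, ∑ a, w h i a • T h i a

lemma hfull_cvec {b : ℕ} (T : Fin 2 → Fin c → A → (Fin b → ZMod 2)) (p : Fin 2)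
    (x y : Fin c → A) (h : simpleTab (T p) x = simpleTab (T p) y) :
    hfull T (cvec p (phi x + phi y)) = 0 := by
  have key : hfull T (cvec p (phi x + phi y)) = simpleTab (T p) x + simpleTab (T p) y := by
    unfold hfull cvec simpleTab
    rw [sum_eq_single_of_mem p (mem_univ p)]
    · rw [← sum_add_distrib]
      refine sum_congr rfl fun i _ => ?_
      simp [phi, add_smul, sum_add_distrib]
    · intro q _ hq
      simp [Pi.single_eq_of_ne hq]
  rw [key, h, add_self_two]

/-- Linearly independent constraints on the tables are satisfied with at most the probability
they would have under fully random hashing. -/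
lemma card_solutions_le {b : ℕ} (w : ℕ → Fin 2 → Fin c → A → ZMod 2) (n : ℕ)
    (h : Ind w (range n)) :
    #{T : Fin 2 → Fin c → A → (Fin b → ZMod 2) | ∀ k < n, hfull T (w k) = 0} * (2 ^ b) ^ n ≤
      Fintype.card (Fin 2 → Fin c → A → (Fin b → ZMod 2)) := by
  choose f hf using fun k : ℕ => h.exists_functional (Pi.single k 1)
  let G : (Fin n → Fin b → ZMod 2) → (Fin 2 → Fin c → A → ZMod 2) →ₗ[ZMod 2] (Fin b → ZMod 2) :=
    fun r => ∑ k : Fin n, (f k).smulRight (r k)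
  let s : (Fin n → Fin b → ZMod 2) → Fin 2 → Fin c → A → (Fin b → ZMod 2) :=
    fun r h i a => G r (Pi.single h (Pi.single i (Pi.single a 1)))
  have hs : ∀ r u, hfull (s r) u = G r u := by
    intro r u
    have hu : u = ∑ h, ∑ i, ∑ a, u h i a •
        (Pi.single h (Pi.single i (Pi.single a 1)) : Fin 2 → Fin c → A → ZMod 2) := by
      funext h i a
      simp only [Finset.sum_apply, Pi.smul_apply]
      rw [sum_eq_single_of_mem h (mem_univ h), sum_eq_single_of_mem i (mem_univ i),
        sum_eq_single_of_mem a (mem_univ a)]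
      · simp
      · intro a' _ hne
        simp [Pi.single_eq_of_ne hne.symm]
      · intro i' _ hne
        simp [Pi.single_eq_of_ne hne.symm]
      · intro h' _ hne
        simp [Pi.single_eq_of_ne hne.symm]
    conv_rhs => rw [hu]
    simp only [map_sum, map_smul]
    rfl
  have hG : ∀ r (k : Fin n), G r (w k) = r k := by
    intro r k
    simp only [G, LinearMap.sum_apply, LinearMap.smulRight_apply]
    rw [sum_eq_single_of_mem k (mem_univ k)]
    · rw [hf k k (mem_range.2 k.2)]; simp
    · intro k' _ hne
      rw [hf k' k (mem_range.2 k.2), Pi.single_eq_of_ne, zero_smul]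
      exact fun h => hne (Fin.ext h.symm)
  have hadd : ∀ (T T' : Fin 2 → Fin c → A → (Fin b → ZMod 2)) u,
      hfull (T + T') u = hfull T u + hfull T' u := by
    intro T T' u
    simp only [hfull, Pi.add_apply, smul_add, sum_add_distrib]
  have hcard : (2 ^ b) ^ n = #(univ : Finset (Fin n → Fin b → ZMod 2)) := by
    simp [ZMod.card]
  rw [hcard, ← card_product, ← card_univ]
  refine card_le_card_of_injOn (fun p => p.1 + s p.2) (fun _ _ => mem_univ _) ?_
  rintro ⟨T, r⟩ hT ⟨T', r'⟩ hT' heq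
  simp only [coe_product, Set.mem_prod, mem_coe, mem_filter] at hT hT'
  have hr : r = r' := by
    funext k
    have := congrArg (fun T => hfull T (w k)) heq
    simpa only [hadd, hT.1.2 k k.2, hT'.1.2 k k.2, hs, hG, zero_add] using this
  subst hr
  simp only [add_left_inj] at heq
  rw [heq]

end Linear

/-! ### Trails and collision constraints -/

section Trails

variable {c : ℕ} {A G : Type*} [Fintype A] [DecidableEq A]

/-- The hash function (equivalently, the side of the bipartite graph) of a given parity. -/
def hh (p : ℕ) : Fin 2 := if p % 2 = 0 then 0 else 1

lemma hh_eq_iff {p q : ℕ} : hh p = hh q ↔ p % 2 = q % 2 := by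
  unfold hh
  split_ifs <;> simp <;> omega

/-- The collision constraints along a list of `M` keys, each given by the parity of a hash
function and two indices: consecutive keys `l, l + 1` (from `l = lo` on) collide under the function
of parity `e + l`; then the last key collides with the key `t` under the other function at its end,
and finally the first key with the key `s` under the other function at its start. -/
def pat (M e lo t s k : ℕ) : ℕ × ℕ × ℕ :=
  if lo + k < M - 1 then (e + (lo + k), lo + k, lo + k + 1)
  else if lo + k = M - 1 then (e + (M - 1), M - 1, t) else (e + 1, 0, s)

/-- The vector on the tables expressing the constraint `q`. -/
def pvec (x : ℕ → Fin c → A) (q : ℕ × ℕ × ℕ) : Fin 2 → Fin c → A → ZMod 2 :=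
  cvec (hh q.1) (phi (x q.2.1) + phi (x q.2.2))

/-- The keys `x 0, …, x (M - 1)` of `X` are distinct and witness `n` linearly independent
collision constraints of the shape `pat`. -/
def Cert (h : Fin 2 → (Fin c → A) → G) (X : Finset (Fin c → A)) (M n : ℕ)
    (x : ℕ → Fin c → A) : Prop :=
  ∃ e lo t s, lo < 2 ∧ t < M ∧ s < M ∧ (∀ l < M, x l ∈ X) ∧
    (∀ l < M, ∀ l' < M, x l = x l' → l = l') ∧
    Ind (fun k => pvec x (pat M e lo t s k)) (range n) ∧
    ∀ k < n, h (hh (pat M e lo t s k).1) (x (pat M e lo t s k).2.1) =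
      h (hh (pat M e lo t s k).1) (x (pat M e lo t s k).2.2)

/-- At least `β` indices `l ∈ J` are covered within `J`: every character of `x l` occurs in the
same position in another `x l'`, `l' ∈ J`. -/
def Covers (x : ℕ → Fin c → A) (J : Finset ℕ) (β : ℕ) : Prop :=
  ∃ K ⊆ J, β ≤ #K ∧ ∀ l ∈ K, ∀ i, ∃ l' ∈ J, l' ≠ l ∧ x l' i = x l i

/-- The number of ways to write `v` as the sum of the vectors of two keys of `X`. -/
def mult (X : Finset (Fin c → A)) (v : Fin c → A → ZMod 2) : ℕ :=
  #{p ∈ X ×ˢ X | phi p.1 + phi p.2 = v}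

/-- Two of the keys, `x a` and `x b`, have the same vector sum as two others, and this sum has at
most `D` representations; moreover four of the remaining indices are covered. -/
def LightCovers (X : Finset (Fin c → A)) (D : ℝ) (x : ℕ → Fin c → A) (M : ℕ) : Prop :=
  ∃ a b u v, a < M ∧ b < M ∧ u < M ∧ v < M ∧ a ≠ b ∧ u ≠ a ∧ u ≠ b ∧ v ≠ a ∧ v ≠ b ∧
    phi (x a) + phi (x b) = phi (x u) + phi (x v) ∧
    (mult X (phi (x u) + phi (x v)) : ℝ) ≤ D ∧ Covers x ((range M \ {a, b})) 4

/-- The hash values avoid all the unlikely configurations. -/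
structure Good (h : Fin 2 → (Fin c → A) → G) (X : Finset (Fin c → A)) (D : ℝ) : Prop where
  two_cycles : ∀ M x, ¬ Cert h X M (M + 1) x
  six : ∀ M x, Covers x (range M) 6 → ¬ Cert h X M (M - 2) x
  four : ∀ M x, Covers x (range M) 4 → ¬ Cert h X M (M - 1) x
  seven : ∀ M x, Covers x (range M) 7 → ¬ Cert h X M (M - 3) x
  light : ∀ x ∈ X, ∀ y ∈ X, x ≠ y → ∀ p, h p x = h p y → (mult X (phi x + phi y) : ℝ) ≤ D
  light_four : ∀ M x, LightCovers X D x M → ¬ Cert h X M (M - 3) x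

/-- A trail of length `L` in `S` with starting parity `e`: a sequence of distinct keys of `S`,
consecutive ones colliding alternately under the two hash functions. It corresponds to a trail in
the bipartite graph in which each key `x` is an edge joining `h 0 x` to `h 1 x`. -/
structure Trail (h : Fin 2 → (Fin c → A) → G) (S : Finset (Fin c → A)) (L e : ℕ)
    (x : ℕ → Fin c → A) : Prop where
  mem : ∀ l < L, x l ∈ S
  inj : ∀ l < L, ∀ l' < L, x l = x l' → l = l'
  adj : ∀ l, l + 1 < L → h (hh (e + l)) (x l) = h (hh (e + l)) (x (l + 1))

/-- A minimally dependent trail whose unique relation involves its first two and its last two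
keys. -/
structure Window (h : Fin 2 → (Fin c → A) → G) (S : Finset (Fin c → A)) (L e : ℕ)
    (x : ℕ → Fin c → A) : Prop where
  trail : Trail h S L e x
  ind_left : Ind (fun l => phi (x l)) (Ico 0 (L - 1))
  ind_right : Ind (fun l => phi (x l)) (Ico 1 L)
  even : Even L
  four_le : 4 ≤ L
  rel : phi (x 0) + phi (x 1) + phi (x (L - 2)) + phi (x (L - 1)) = 0

/-- The trail without its first key, extended by `y`. -/
def rot (L : ℕ) (y : Fin c → A) (x : ℕ → Fin c → A) : ℕ → Fin c → A :=
  fun l => if l = L - 1 then y else x (l + 1)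

variable {h : Fin 2 → (Fin c → A) → G} {S X : Finset (Fin c → A)} {D : ℝ}
  {L M N e : ℕ} {x : ℕ → Fin c → A} {y : Fin c → A}

lemma phi_injective : Function.Injective (phi : (Fin c → A) → _) := by
  intro x y hxy
  funext i
  have := congrFun (congrFun hxy i) (x i)
  by_contra hne
  simp [phi, Ne.symm hne] at this

lemma Ind.comp {V : Type*} [AddCommMonoid V] {v : ℕ → V} {s t : Finset ℕ} (hv : Ind v t)
    (f : ℕ → ℕ) (hf : ∀ k ∈ s, ∀ l ∈ s, f k = f l → k = l) (hm : ∀ l ∈ s, f l ∈ t) :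
    Ind (fun l => v (f l)) s := by
  intro R hR h0
  have h1 := hv (R.image f) (fun k hk => by
    obtain ⟨l, hl, rfl⟩ := mem_image.1 hk
    exact hm l (hR hl)) (by
    rw [sum_image]
    · exact h0
    · intro k hk l hl
      exact hf k (hR hk) l (hR hl))
  exact image_eq_empty.1 h1

lemma Ind.congr {V : Type*} [AddCommMonoid V] {v w : ℕ → V} {s : Finset ℕ} (hv : Ind v s)
    (hvw : ∀ l ∈ s, v l = w l) : Ind w s := by
  intro R hR h0
  apply hv R hR
  rw [← h0]
  exact sum_congr rfl fun l hl => hvw l (hR hl)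

lemma Trail.mono (hx : Trail h S L e x) (hN : N ≤ L) : Trail h S N e x :=
  ⟨fun l hl => hx.mem l (by omega), fun l hl l' hl' => hx.inj l (by omega) l' (by omega),
    fun l hl => hx.adj l (by omega)⟩

lemma Trail.shift (hx : Trail h S L e x) (i : ℕ) :
    Trail h S (L - i) (e + i) (fun l => x (l + i)) := by
  refine ⟨fun l hl => hx.mem _ (by omega), fun l hl l' hl' heq => ?_, fun l hl => ?_⟩
  · have := hx.inj _ (by omega) _ (by omega) heq
    omega
  · have := hx.adj (l + i) (by omega)
    rw [show e + i + l = e + (l + i) by ring, show l + 1 + i = l + i + 1 by ring]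
    exact this

lemma Trail.reverse (hx : Trail h S L e x) :
    Trail h S L (e + L) (fun l => x (L - 1 - l)) := by
  refine ⟨fun l hl => hx.mem _ (by omega), fun l hl l' hl' heq => ?_, fun l hl => ?_⟩
  · have := hx.inj _ (by omega) _ (by omega) heq
    omega
  · have := hx.adj (L - 1 - (l + 1)) (by omega)
    rw [show L - 1 - (l + 1) + 1 = L - 1 - l by omega,
      hh_eq_iff.2 (show (e + (L - 1 - (l + 1))) % 2 = (e + L + l) % 2 by omega)] at this
    exact this.symm

lemma Trail.snoc (hx : Trail h S L e x) (hL : 1 ≤ L) (hy : y ∈ S) (hnew : ∀ l < L, x l ≠ y)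
    (hadj : h (hh (e + (L - 1))) y = h (hh (e + (L - 1))) (x (L - 1))) :
    Trail h S (L + 1) e (Function.update x L y) := by
  have hu : ∀ l < L, Function.update x L y l = x l := fun l hl =>
    Function.update_of_ne (by omega) _ _
  have huL : Function.update x L y L = y := Function.update_self ..
  refine ⟨fun l hl => ?_, fun l hl l' hl' heq => ?_, fun l hl => ?_⟩
  · rcases Nat.lt_succ_iff_lt_or_eq.1 hl with h1 | rfl
    · rw [hu l h1]; exact hx.mem l h1
    · rwa [huL]
  · rcases Nat.lt_succ_iff_lt_or_eq.1 hl with h1 | rfl <;>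
      rcases Nat.lt_succ_iff_lt_or_eq.1 hl' with h2 | rfl
    · rw [hu l h1, hu l' h2] at heq
      exact hx.inj l h1 l' h2 heq
    · rw [hu l h1, huL] at heq
      exact absurd heq (hnew l h1)
    · rw [hu l' h2, huL] at heq
      exact absurd heq.symm (hnew l' h2)
    · rfl
  · rcases Nat.lt_succ_iff_lt_or_eq.1 hl with h1 | h1
    · rw [hu l (by omega), hu (l + 1) h1]
      exact hx.adj l h1
    · rw [hu l (by omega), h1, huL]
      rw [show l = L - 1 by omega]
      exact hadj.symm

lemma Trail.rot (hx : Trail h S L e x) (hL : 2 ≤ L) 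
    (hadj : h (hh (e + (L - 1))) (x 0) = h (hh (e + (L - 1))) (x (L - 1))) :
    Trail h S L (e + 1) (rot L (x 0) x) := by
  have hu : ∀ l, l + 1 < L → _root_.rot L (x 0) x l = x (l + 1) := fun l hl =>
    if_neg (by omega)
  have huL : _root_.rot L (x 0) x (L - 1) = x 0 := if_pos rfl
  refine ⟨fun l hl => ?_, fun l hl l' hl' heq => ?_, fun l hl => ?_⟩
  · unfold _root_.rot
    split_ifs
    · exact hx.mem 0 (by omega)
    · exact hx.mem _ (by omega)
  · unfold _root_.rot at heq
    split_ifs at heq with h1 h2 h2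
    · omega
    · have := hx.inj _ (by omega) _ (by omega) heq; omega
    · have := hx.inj _ (by omega) _ (by omega) heq; omega
    · have := hx.inj _ (by omega) _ (by omega) heq; omega
  · rw [hu l hl]
    by_cases h1 : l + 1 = L - 1
    · rw [h1, huL, show e + 1 + l = e + (L - 1) by omega]
      exact hadj.symm
    · rw [hu (l + 1) (by omega), show e + 1 + l = e + (l + 1) by ring]
      exact hx.adj (l + 1) (by omega)

lemma Trail.length_le (hx : Trail h S L e x) : L ≤ #S := by
  have : #(range L) ≤ #S := card_le_card_of_injOn x (fun l hl => hx.mem l (by simpa using hl))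
    fun l hl l' hl' => hx.inj l (by simpa using hl) l' (by simpa using hl')
  simpa using this

/-- Independence of the constraints from a triangular system of functionals on the vectors
of keys; constraints for different hash functions do not interact. -/
lemma ind_pvec (q : ℕ → ℕ × ℕ × ℕ) (n : ℕ)
    (hf : ∀ k < n, ∃ f : (Fin c → A → ZMod 2) →ₗ[ZMod 2] ZMod 2,
      f (phi (x (q k).2.1)) + f (phi (x (q k).2.2)) = 1 ∧
      ∀ m < k, (q m).1 % 2 = (q k).1 % 2 →
        f (phi (x (q m).2.1)) + f (phi (x (q m).2.2)) = 0) :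
    Ind (fun k => pvec x (q k)) (range n) := by
  apply ind_of_triangular
  intro k hk
  obtain ⟨f, h1, h0⟩ := hf k hk
  refine ⟨f ∘ₗ LinearMap.proj (hh (q k).1), ?_, fun m hm => ?_⟩
  · simp [pvec, cvec, h1]
  · simp only [pvec, cvec, LinearMap.comp_apply, LinearMap.proj_apply]
    by_cases heq : hh (q m).1 = hh (q k).1
    · rw [heq, Pi.single_eq_same, map_add]
      exact h0 m hm (hh_eq_iff.1 heq)
    · rw [Pi.single_eq_of_ne (Ne.symm heq), map_zero]

lemma pat_of_lt {lo t s k : ℕ} (hk : lo + k < M - 1) :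
    pat M e lo t s k = (e + (lo + k), lo + k, lo + k + 1) := if_pos hk

lemma pat_of_eq {lo t s k : ℕ} (hk : lo + k = M - 1) :
    pat M e lo t s k = (e + (M - 1), M - 1, t) := by
  unfold pat; rw [if_neg (by omega), if_pos hk]

lemma pat_of_gt {lo t s k : ℕ} (hk : M - 1 < lo + k) :
    pat M e lo t s k = (e + 1, 0, s) := by
  unfold pat; rw [if_neg (by omega), if_neg (by omega)]

/-- The functional for a consecutive constraint reaching a new independent key. -/
lemma fresh {lo t s k : ℕ} (hk : lo + k < M - 1)
    (hI : Ind (fun l => phi (x l)) (Ico lo (lo + k + 2))) :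
    ∃ f : (Fin c → A → ZMod 2) →ₗ[ZMod 2] ZMod 2,
      f (phi (x (pat M e lo t s k).2.1)) + f (phi (x (pat M e lo t s k).2.2)) = 1 ∧
      ∀ m < k, (pat M e lo t s m).1 % 2 = (pat M e lo t s k).1 % 2 →
        f (phi (x (pat M e lo t s m).2.1)) + f (phi (x (pat M e lo t s m).2.2)) = 0 := by
  obtain ⟨f, hf⟩ := hI.exists_functional (fun l => if l = lo + k + 1 then 1 else 0)
  refine ⟨f, ?_, fun m hm _ => ?_⟩
  · rw [pat_of_lt hk]
    dsimp only
    rw [hf _ (mem_Ico.2 (by omega)), hf _ (mem_Ico.2 (by omega)), if_neg (by omega), if_pos rfl,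
      zero_add]
  · rw [pat_of_lt (by omega)]
    dsimp only
    rw [hf _ (mem_Ico.2 (by omega)), hf _ (mem_Ico.2 (by omega)), if_neg (by omega),
      if_neg (by omega), zero_add]

/-- Keys that take part in relations within `J` are covered within `J`. -/
lemma covers_of_rel {J : Finset ℕ} {β : ℕ} (K : Finset ℕ) (hK : K ⊆ J) (hβ : β ≤ #K)
    (hr : ∀ l ∈ K, ∃ R ⊆ J, l ∈ R ∧ ∑ k ∈ R, phi (x k) = 0) : Covers x J β := by
  refine ⟨K, hK, hβ, fun l hl i => ?_⟩
  obtain ⟨R, hRJ, hlR, hR⟩ := hr l hl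
  obtain ⟨l', h1, h2, h3⟩ := rel_cover hR hlR i
  exact ⟨l', hRJ h1, h2, h3⟩

lemma Trail.pat_adj (hx : Trail h S M e x) {lo t s k : ℕ} (hk : lo + k < M - 1) :
    h (hh (pat M e lo t s k).1) (x (pat M e lo t s k).2.1) =
      h (hh (pat M e lo t s k).1) (x (pat M e lo t s k).2.2) := by
  rw [pat_of_lt hk]
  exact hx.adj _ (by omega)

lemma Good.not_two_cycles (hg : Good h X D) (hS : S ⊆ X) (hx : Trail h S M e x)
    (hI : Ind (fun l => phi (x l)) (Ico 0 M)) {t s : ℕ} (ht : t < M - 1) (hs : 0 < s)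
    (hsM : s < M) (hts : t ≠ 0 ∨ M % 2 = 1)
    (htx : h (hh (e + (M - 1))) (x t) = h (hh (e + (M - 1))) (x (M - 1)))
    (hsx : h (hh (e + 1)) (x s) = h (hh (e + 1)) (x 0)) : False := by
  refine hg.two_cycles M x ⟨e, 0, t, s, by omega, by omega, by omega,
    fun l hl => hS (hx.mem l hl), hx.inj, ind_pvec _ _ fun k hk => ?_, fun k hk => ?_⟩
  · rcases lt_trichotomy k (M - 1) with h1 | h1 | h1
    · exact fresh (by omega) (hI.mono (Ico_subset_Ico le_rfl (by omega)))
    · obtain ⟨f, hf⟩ := hI.exists_functional (fun l => if l = M - 1 then 1 else 0)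
      refine ⟨f, ?_, fun m hm hpar => ?_⟩
      · rw [pat_of_eq (by omega)]
        dsimp only
        rw [hf _ (mem_Ico.2 (by omega)), hf _ (mem_Ico.2 (by omega)), if_pos rfl,
          if_neg (by omega), add_zero]
      · rw [pat_of_lt (by omega), pat_of_eq (by omega)] at hpar
        rw [pat_of_lt (by omega)]
        dsimp only at hpar ⊢
        rw [hf _ (mem_Ico.2 (by omega)), hf _ (mem_Ico.2 (by omega)), if_neg (by omega),
          if_neg (by omega), add_zero]
    · obtain ⟨f, hf⟩ := hI.exists_functional (fun l => if l = 0 then 1 else 0)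
      refine ⟨f, ?_, fun m hm hpar => ?_⟩
      · rw [pat_of_gt (by omega)]
        dsimp only
        rw [hf _ (mem_Ico.2 (by omega)), hf _ (mem_Ico.2 (by omega)), if_pos rfl,
          if_neg (by omega), add_zero]
      · rw [pat_of_gt (show M - 1 < 0 + k by omega)] at hpar
        by_cases h2 : m = M - 1
        · rw [pat_of_eq (by omega)] at hpar ⊢
          dsimp only at hpar ⊢
          rw [hf _ (mem_Ico.2 (by omega)), hf _ (mem_Ico.2 (by omega)), if_neg (by omega),
            if_neg (by omega), add_zero]
        · rw [pat_of_lt (by omega)] at hpar ⊢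
          dsimp only at hpar ⊢
          rw [hf _ (mem_Ico.2 (by omega)), hf _ (mem_Ico.2 (by omega)), if_neg (by omega),
            if_neg (by omega), add_zero]
  · rcases lt_trichotomy k (M - 1) with h1 | h1 | h1
    · exact hx.pat_adj (by omega)
    · rw [pat_of_eq (by omega)]
      exact htx.symm
    · rw [pat_of_gt (by omega)]
      exact hsx.symm

end Trails

/-! ### Dependent trails -/

section Windows

variable {c : ℕ} {A G : Type*} [Fintype A] [DecidableEq A]
  {h : Fin 2 → (Fin c → A) → G} {S X : Finset (Fin c → A)} {D : ℝ}
  {L M N e : ℕ} {x : ℕ → Fin c → A} {y : Fin c → A}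

lemma Good.not_six (hg : Good h X D) (hS : S ⊆ X) (hx : Trail h S L e x)
    (hI : Ind (fun l => phi (x l)) (Ico 0 (L - 1))) {R : Finset ℕ} (hR : R ⊆ range L)
    (h0 : ∑ l ∈ R, phi (x l) = 0) (h6 : 6 ≤ #R) : False := by
  have hL : 0 < L := by
    by_contra hL
    have := card_le_card hR
    rw [card_range] at this
    omega
  refine hg.six L x (covers_of_rel R hR h6 fun l hl => ⟨R, hR, hl, h0⟩) ⟨e, 0, 0, 0, by omega,
    by omega, by omega, fun l hl => hS (hx.mem l hl), hx.inj, ind_pvec _ _ fun k hk => ?_,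
    fun k hk => ?_⟩
  · exact fresh (by omega) (hI.mono (Ico_subset_Ico le_rfl (by omega)))
  · exact hx.pat_adj (by omega)

/-- A trail whose keys have a relation with four terms, while all of its collision constraints are
independent. -/
lemma Good.not_four (hg : Good h X D) (hS : S ⊆ X) (hx : Trail h S L e x)
    (hI : Ind (fun l => phi (x l)) (Ico 0 (L - 1))) {R : Finset ℕ} (hR : R ⊆ range L)
    (h0 : ∑ l ∈ R, phi (x l) = 0) (h4 : 4 ≤ #R)
    (hf : ∃ f : (Fin c → A → ZMod 2) →ₗ[ZMod 2] ZMod 2,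
      f (phi (x (L - 2))) + f (phi (x (L - 1))) = 1 ∧
      ∀ m < L - 2, m % 2 = L % 2 → f (phi (x m)) + f (phi (x (m + 1))) = 0) : False := by
  have hL : 4 ≤ L := by
    have := card_le_card hR
    rw [card_range] at this
    omega
  refine hg.four L x (covers_of_rel R hR h4 fun l hl => ⟨R, hR, hl, h0⟩) ⟨e, 0, 0, 0, by omega,
    by omega, by omega, fun l hl => hS (hx.mem l hl), hx.inj, ind_pvec _ _ fun k hk => ?_,
    fun k hk => ?_⟩
  · by_cases hk2 : k < L - 2
    · exact fresh (by omega) (hI.mono (Ico_subset_Ico le_rfl (by omega)))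
    · obtain ⟨f, hf1, hf0⟩ := hf
      refine ⟨f, ?_, fun m hm hpar => ?_⟩
      · rw [pat_of_lt (by omega)]
        dsimp only
        rw [show 0 + k = L - 2 by omega, show L - 2 + 1 = L - 1 by omega]
        exact hf1
      · rw [pat_of_lt (by omega), pat_of_lt (by omega)] at hpar
        rw [pat_of_lt (by omega)]
        dsimp only at hpar ⊢
        rw [show 0 + m = m by omega]
        exact hf0 m (by omega) (by omega)
  · exact hx.pat_adj (by omega)

/-- A minimally dependent trail is a window: otherwise its relation is long, or the relation is so
placed that all collision constraints are independent. -/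
lemma Good.window (hg : Good h X D) (hc : 1 ≤ c) (hS : S ⊆ X) (hx : Trail h S L e x)
    (hI : Ind (fun l => phi (x l)) (Ico 0 (L - 1))) (hI' : Ind (fun l => phi (x l)) (Ico 1 L))
    (hd : ¬ Ind (fun l => phi (x l)) (Ico 0 L)) : Window h S L e x := by
  unfold Ind at hd
  push Not at hd
  obtain ⟨R, hR, h0, hne⟩ := hd
  have hRL : ∀ l ∈ R, l < L := fun l hl => (mem_Ico.1 (hR hl)).2
  have hRr : R ⊆ range L := fun l hl => mem_range.2 (hRL l hl)
  have h4 : 4 ≤ #R := rel_four hc h0 (fun l hl l' hl' => hx.inj l (hRL l hl) l' (hRL l' hl'))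
    hne
  have hev := rel_even hc h0
  have hR0 : 0 ∈ R := by
    by_contra h1
    exact hne.ne_empty (hI' R (fun l hl => mem_Ico.2 ⟨Nat.one_le_iff_ne_zero.2
      (fun h2 => h1 (h2 ▸ hl)), hRL l hl⟩) h0)
  have hR1 : L - 1 ∈ R := by
    by_contra h1
    refine hne.ne_empty (hI R (fun l hl => mem_Ico.2 ⟨Nat.zero_le _, ?_⟩) h0)
    have := hRL l hl
    have : l ≠ L - 1 := fun h2 => h1 (h2 ▸ hl)
    omega
  have hL4 : 4 ≤ L := by
    have := card_le_card hRr
    rw [card_range] at this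
    omega
  have hcard : #R = 4 := by
    by_contra h5
    refine hg.not_six hS hx hI hRr h0 ?_
    obtain ⟨k, hk⟩ := hev
    omega
  obtain ⟨a, b, hab, hRab, ha, hb⟩ : ∃ a b, a < b ∧ (R.erase 0).erase (L - 1) = {a, b} ∧
      (0 < a) ∧ b < L - 1 := by
    have h2 : #((R.erase 0).erase (L - 1)) = 2 := by
      rw [card_erase_of_mem (mem_erase.2 ⟨by omega, hR1⟩), card_erase_of_mem hR0, hcard]
    obtain ⟨a, b, hab, hR2⟩ := card_eq_two.1 h2
    have ha : a ∈ (R.erase 0).erase (L - 1) := by rw [hR2]; simp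
    have hb : b ∈ (R.erase 0).erase (L - 1) := by rw [hR2]; simp
    simp only [mem_erase] at ha hb
    have h3 := hRL a ha.2.2
    have h4 := hRL b hb.2.2
    rcases Nat.lt_or_gt_of_ne hab with h1 | h1
    · exact ⟨a, b, h1, hR2, by omega, by omega⟩
    · exact ⟨b, a, h1, by rw [hR2, pair_comm], by omega, by omega⟩
  have hrel : phi (x 0) + phi (x a) + phi (x b) + phi (x (L - 1)) = 0 := by
    rw [← h0, ← add_sum_erase R _ hR0,
      ← add_sum_erase (R.erase 0) _ (mem_erase.2 ⟨by omega, hR1⟩), hRab, sum_pair (by omega)]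
    abel
  have hfun : ∀ Z : ℕ → ZMod 2, Z (L - 2) + (Z 0 + Z a + Z b) = 1 →
      (∀ m < L - 2, m % 2 = L % 2 → Z m + Z (m + 1) = 0) → False := by
    intro Z hZ1 hZ0
    obtain ⟨f, hf⟩ := hI.exists_functional Z
    refine hg.not_four hS hx hI hRr h0 h4 ⟨f, ?_, fun m hm hpar => ?_⟩
    · have : f (phi (x (L - 1))) = Z 0 + Z a + Z b := by
        have h1 := congrArg f hrel
        simp only [map_add, map_zero] at h1
        rw [hf 0 (mem_Ico.2 (by omega)), hf a (mem_Ico.2 (by omega)),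
          hf b (mem_Ico.2 (by omega))] at h1
        exact (add_eq_zero_two.1 h1).symm
      rw [this, hf _ (mem_Ico.2 (by omega)), hZ1]
    · rw [hf _ (mem_Ico.2 (by omega)), hf _ (mem_Ico.2 (by omega))]
      exact hZ0 m hm hpar
  have hb2 : b = L - 2 := by
    by_contra hb2
    refine hfun (fun l => if l = L - 2 then 1 else 0) ?_ fun m hm hpar => ?_
    · rw [if_pos rfl, if_neg (by omega), if_neg (by omega), if_neg hb2]
      rfl
    · rw [if_neg (by omega), if_neg (by omega), add_zero]
  have hLe : L % 2 = 0 := by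
    by_contra hodd
    refine hfun (fun l => if l = 0 then 1 else 0) ?_ fun m hm hpar => ?_
    · rw [if_neg (by omega), if_pos rfl, if_neg (by omega), if_neg (by omega)]
      rfl
    · rw [if_neg (by omega), if_neg (by omega), add_zero]
  have ha1 : a = 1 := by
    by_contra ha1
    refine hfun (fun l => if l ≤ 1 then 1 else 0) ?_ fun m hm hpar => ?_
    · rw [if_neg (by omega), if_pos (by omega), if_neg (by omega), if_neg (by omega)]
      rfl
    · by_cases hm0 : m = 0
      · rw [if_pos (by omega), if_pos (by omega)]
        rfl
      · rw [if_neg (by omega), if_neg (by omega), add_zero]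
  subst ha1 hb2
  exact ⟨hx, hI, hI', Nat.even_iff.2 hLe, hL4, hrel⟩

/-- A trail that becomes dependent with its last key ends in a window. -/
lemma Good.exists_window (hg : Good h X D) (hc : 1 ≤ c) (hS : S ⊆ X) (hx : Trail h S (N + 1) e x)
    {lo : ℕ} (hlo : lo ≤ N) (hI : Ind (fun l => phi (x l)) (Ico lo N))
    (hd : ¬ Ind (fun l => phi (x l)) (Ico lo (N + 1))) :
    ∃ i, lo ≤ i ∧ i ≤ N ∧ Window h S (N + 1 - i) (e + i) (fun l => x (l + i)) := by
  classical
  have hend : Ind (fun l => phi (x l)) (Ico (N + 1) (N + 1)) := by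
    intro R hR _
    rw [Ico_self] at hR
    exact subset_empty.1 hR
  have hex : ∃ i, Ind (fun l => phi (x l)) (Ico (lo + i) (N + 1)) :=
    ⟨N + 1 - lo, by rwa [show lo + (N + 1 - lo) = N + 1 by omega]⟩
  obtain ⟨j, hj⟩ : ∃ j, Nat.find hex = j + 1 := by
    refine Nat.exists_eq_succ_of_ne_zero fun h0 => hd ?_
    have := Nat.find_spec hex
    rwa [h0] at this
  have hspec := Nat.find_spec hex
  have hmin := Nat.find_min hex (m := j) (by omega)
  have hle : Nat.find hex ≤ N + 1 - lo :=
    Nat.find_min' hex (by rwa [show lo + (N + 1 - lo) = N + 1 by omega])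
  rw [hj] at hspec
  refine ⟨lo + j, by omega, by omega, hg.window hc hS (hx.shift _) ?_ ?_ fun hI' => hmin ?_⟩
  · exact hI.comp (fun l => l + (lo + j)) (fun _ _ _ _ _ => by omega)
      fun l hl => by rw [mem_Ico] at hl ⊢; omega
  · exact hspec.comp (fun l => l + (lo + j)) (fun _ _ _ _ _ => by omega)
      fun l hl => by rw [mem_Ico] at hl ⊢; omega
  · refine (hI'.comp (s := Ico (lo + j) (N + 1)) (fun l => l - (lo + j))
      (fun k hk l hl _ => ?_) (fun l hl => ?_)).congr fun l hl => ?_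
    · rw [mem_Ico] at hk hl; omega
    · rw [mem_Ico] at hl ⊢; omega
    · rw [mem_Ico] at hl
      rw [Nat.sub_add_cancel (by omega)]

/-- A trail with a four-term relation whose end closes up to an inner key: the closing edge
replaces the constraint lost to the relation. -/
lemma Good.not_closing (hg : Good h X D) (hS : S ⊆ X) (hx : Trail h S M e x)
    (hL : 4 ≤ L) (hLM : L ≤ M)
    (hrel : phi (x 0) + phi (x 1) + phi (x (L - 2)) + phi (x (L - 1)) = 0)
    (hI : Ind (fun l => phi (x l)) (Ico 1 M)) {t : ℕ} (ht : 1 ≤ t) (htM : t < M - 1)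
    (htx : h (hh (e + (M - 1))) (x t) = h (hh (e + (M - 1))) (x (M - 1))) : False := by
  have hK : ∑ l ∈ ({0, 1, L - 2, L - 1} : Finset ℕ), phi (x l) = 0 := by
    rw [sum_insert (by simp; omega), sum_insert (by simp; omega), sum_pair (by omega), ← hrel]
    abel
  have hKM : ({0, 1, L - 2, L - 1} : Finset ℕ) ⊆ range M := by
    intro l hl
    simp only [mem_insert, mem_singleton] at hl
    rw [mem_range]
    omega
  have hKc : #({0, 1, L - 2, L - 1} : Finset ℕ) = 4 := by
    rw [card_insert_of_notMem (by simp; omega), card_insert_of_notMem (by simp; omega),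
      card_pair (by omega)]
  refine hg.four M x (covers_of_rel _ hKM hKc.ge fun l hl => ⟨_, hKM, hl, hK⟩) ⟨e, 1, t, 0,
    by omega, by omega, by omega, fun l hl => hS (hx.mem l hl), hx.inj,
    ind_pvec _ _ fun k hk => ?_, fun k hk => ?_⟩
  · by_cases h1 : 1 + k < M - 1
    · exact fresh (by omega) (hI.mono (Ico_subset_Ico le_rfl (by omega)))
    · obtain ⟨f, hf⟩ := hI.exists_functional (fun l => if l = M - 1 then 1 else 0)
      refine ⟨f, ?_, fun m hm hpar => ?_⟩
      · rw [pat_of_eq (by omega)]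
        dsimp only
        rw [hf _ (mem_Ico.2 (by omega)), hf _ (mem_Ico.2 (by omega)), if_pos rfl,
          if_neg (by omega), add_zero]
      · rw [pat_of_lt (by omega), pat_of_eq (by omega)] at hpar
        rw [pat_of_lt (by omega)]
        dsimp only at hpar ⊢
        rw [hf _ (mem_Ico.2 (by omega)), hf _ (mem_Ico.2 (by omega)), if_neg (by omega),
          if_neg (by omega), add_zero]
  · by_cases h1 : 1 + k < M - 1
    · exact hx.pat_adj (by omega)
    · rw [pat_of_eq (by omega)]
      exact htx.symm

/-- A trail with two different relations of four terms, the second through its last key. -/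
lemma Good.not_two_relations (hg : Good h X D) (hS : S ⊆ X) (hx : Trail h S (N + 1) e x)
    (hL : 4 ≤ L) (hLN : L ≤ N)
    (hrel : phi (x 0) + phi (x 1) + phi (x (L - 2)) + phi (x (L - 1)) = 0)
    (hI : Ind (fun l => phi (x l)) (Ico 1 N)) {i : ℕ} (hi : 1 ≤ i) (hiN : i + 1 < N - 1)
    (hrel' : phi (x i) + phi (x (i + 1)) + phi (x (N - 1)) + phi (x N) = 0)
    (hne : ¬ (i = 1 ∧ N = L)) : False := by
  set R : Finset ℕ := {0, 1, L - 2, L - 1} with hRdef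
  set R' : Finset ℕ := {i, i + 1, N - 1, N} with hRdef'
  have hR : ∑ l ∈ R, phi (x l) = 0 := by
    rw [hRdef, sum_insert (by simp; omega), sum_insert (by simp; omega), sum_pair (by omega),
      ← hrel]
    abel
  have hR' : ∑ l ∈ R', phi (x l) = 0 := by
    rw [hRdef', sum_insert (by simp; omega), sum_insert (by simp; omega), sum_pair (by omega),
      ← hrel']
    abel
  have hmem : ∀ l, l ∈ R ↔ l = 0 ∨ l = 1 ∨ l = L - 2 ∨ l = L - 1 := by simp [hRdef]
  have hmem' : ∀ l, l ∈ R' ↔ l = i ∨ l = i + 1 ∨ l = N - 1 ∨ l = N := by simp [hRdef']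
  have hRN : R ⊆ range (N + 1) := by
    intro l hl
    rw [hmem] at hl
    rw [mem_range]
    omega
  have hRN' : R' ⊆ range (N + 1) := by
    intro l hl
    rw [hmem'] at hl
    rw [mem_range]
    omega
  have hRc : #R = 4 := by
    rw [hRdef, card_insert_of_notMem (by simp; omega), card_insert_of_notMem (by simp; omega),
      card_pair (by omega)]
  have hRc' : #R' = 4 := by
    rw [hRdef', card_insert_of_notMem (by simp; omega), card_insert_of_notMem (by simp; omega),
      card_pair (by omega)]
  have hcert : Cert h X (N + 1) (N + 1 - 3) x := by
    refine ⟨e, 1, 0, 0, by omega, by omega, by omega, fun l hl => hS (hx.mem l hl), hx.inj,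
      ind_pvec _ _ fun k hk => ?_, fun k hk => ?_⟩
    · exact fresh (by omega) (hI.mono (Ico_subset_Ico le_rfl (by omega)))
    · exact hx.pat_adj (by omega)
  -- Two consecutive keys common to both relations collide, so their sum is light.
  have hlight : ∀ a b u, a < N + 1 → b < N + 1 → u + 1 < N + 1 → a ≠ b → a ∉ R → b ∉ R →
      u ∈ R → u + 1 ∈ R → phi (x a) + phi (x b) = phi (x u) + phi (x (u + 1)) → False := by
    intro a b u ha hb hu hab haR hbR huR huR' heq
    have hRab : R ⊆ range (N + 1) \ {a, b} := by
      intro l hl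
      rw [mem_sdiff]
      refine ⟨hRN hl, ?_⟩
      rw [mem_insert, mem_singleton]
      rintro (rfl | rfl)
      · exact haR hl
      · exact hbR hl
    refine hg.light_four (N + 1) x ⟨a, b, u, u + 1, ha, hb, by omega, hu, hab,
      fun h1 => haR (h1 ▸ huR), fun h1 => hbR (h1 ▸ huR), fun h1 => haR (h1 ▸ huR'),
      fun h1 => hbR (h1 ▸ huR'), heq, ?_,
      covers_of_rel R hRab hRc.ge fun l hl => ⟨R, hRab, hl, hR⟩⟩ hcert
    refine hg.light _ (hS (hx.mem _ (by omega))) _ (hS (hx.mem _ hu)) (fun h1 => ?_) _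
      (hx.adj u hu)
    have := hx.inj _ (by omega) _ hu h1
    omega
  by_cases hc1 : i = L - 2 ∧ L < N
  · refine hlight (N - 1) N i (by omega) (by omega) (by omega) (by omega) ?_ ?_ ?_ ?_ ?_
    · rw [hmem]; omega
    · rw [hmem]; omega
    · rw [hmem]; omega
    · rw [hmem]; omega
    · rw [← add_eq_zero_two, ← hrel']; abel
  by_cases hc2 : i + 1 = L - 2 ∧ N = L
  · refine hlight i N (N - 2) (by omega) (by omega) (by omega) (by omega) ?_ ?_ ?_ ?_ ?_
    · rw [hmem]; omega
    · rw [hmem]; omega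
    · rw [hmem]; omega
    · rw [hmem]; omega
    · rw [← add_eq_zero_two, ← hrel', show i + 1 = N - 2 by omega,
        show N - 2 + 1 = N - 1 by omega]
      abel
  by_cases hc3 : i = 1 ∧ L = 4 ∧ L < N
  · refine hlight (N - 1) N i (by omega) (by omega) (by omega) (by omega) ?_ ?_ ?_ ?_ ?_
    · rw [hmem]; omega
    · rw [hmem]; omega
    · rw [hmem]; omega
    · rw [hmem]; omega
    · rw [← add_eq_zero_two, ← hrel']; abel
  have hinter : #(R ∩ R') ≤ 1 := by
    rw [card_le_one]
    intro k hk l hl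
    rw [mem_inter, hmem, hmem'] at hk hl
    omega
  have hunion : 7 ≤ #(R ∪ R') := by
    have := card_union_add_card_inter R R'
    omega
  refine hg.seven (N + 1) x (covers_of_rel (R ∪ R') (union_subset hRN hRN') hunion
    fun l hl => ?_) hcert
  rcases mem_union.1 hl with h1 | h1
  · exact ⟨R, hRN, h1, hR⟩
  · exact ⟨R', hRN', h1, hR'⟩

end Windows

/-! ### Obstructions to a placement -/

section Main

variable {c : ℕ} {A G : Type*} [Fintype A] [DecidableEq A]
  {h : Fin 2 → (Fin c → A) → G} {S X : Finset (Fin c → A)} {D : ℝ}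
  {L M N e : ℕ} {x : ℕ → Fin c → A} {y : Fin c → A}

/-- Let a trail begin with a relation as in a window, its keys other than the first being
independent. If it is continued by `y`, then either it becomes longer, its tail remaining
independent, or it is no longer than the relation, `y` is determined by the trail, and dropping the
first key gives a window. -/
lemma Good.step (hg : Good h X D) (hc : 1 ≤ c) (hS : S ⊆ X) (hx : Trail h S N e x)
    (hL : 4 ≤ L) (hLN : L ≤ N)
    (hrel : phi (x 0) + phi (x 1) + phi (x (L - 2)) + phi (x (L - 1)) = 0)
    (hI : Ind (fun l => phi (x l)) (Ico 1 N)) (hy : y ∈ S) (hyx : y ≠ x (N - 1))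
    (hadj : h (hh (e + (N - 1))) y = h (hh (e + (N - 1))) (x (N - 1))) :
    (Trail h S (N + 1) e (Function.update x N y) ∧
      Ind (fun l => phi (Function.update x N y l)) (Ico 1 (N + 1))) ∨
    (N = L ∧ phi y = phi (x 1) + phi (x 2) + phi (x (L - 1)) ∧
      Window h S L (e + 1) (rot L y x)) := by
  by_cases hnew : ∀ l < N, x l ≠ y
  · have hx' := hx.snoc (by omega) hy hnew hadj
    have hu : ∀ l < N, Function.update x N y l = x l := fun l hl =>
      Function.update_of_ne (by omega) _ _
    have huN : Function.update x N y N = y := Function.update_self ..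
    have hI1 : Ind (fun l => phi (Function.update x N y l)) (Ico 1 N) :=
      hI.congr fun l hl => by rw [hu l (mem_Ico.1 hl).2]
    by_cases hI' : Ind (fun l => phi (Function.update x N y l)) (Ico 1 (N + 1))
    · exact Or.inl ⟨hx', hI'⟩
    · obtain ⟨i, hi, hiN, hw⟩ := hg.exists_window hc hS hx' (by omega) hI1 hI'
      have h4 := hw.four_le
      have hrel' := hw.rel
      rw [show 0 + i = i by omega, show 1 + i = i + 1 by omega,
        show N + 1 - i - 2 + i = N - 1 by omega, show N + 1 - i - 1 + i = N by omega] at hrel'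
      by_cases hiL : i = 1 ∧ N = L
      · obtain ⟨rfl, rfl⟩ := hiL
        refine Or.inr ⟨rfl, ?_, ?_⟩
        · rw [hu _ (by omega), hu _ (by omega), hu _ (by omega), huN] at hrel'
          exact (add_eq_zero_two.1 hrel').symm
        · have : rot N y x = fun l => Function.update x N y (l + 1) := by
            funext l
            by_cases hl : l = N - 1
            · rw [rot, if_pos hl, show l + 1 = N by omega, huN]
            · rw [rot, if_neg hl, Function.update_of_ne (by omega)]
          rw [this]
          exact hw
      · exact (hg.not_two_relations hS hx' hL hLN
          (by rw [hu _ (by omega), hu _ (by omega), hu _ (by omega), hu _ (by omega), hrel])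
          hI1 hi (by omega) hrel' hiL).elim
  · push Not at hnew
    obtain ⟨t, htN, rfl⟩ := hnew
    have htN1 : t ≠ N - 1 := fun h1 => hyx (by rw [h1])
    by_cases ht : t = 0
    · subst ht
      have hx' := hx.rot (by omega) hadj
      have hu : ∀ l, l + 1 < N → rot N (x 0) x l = x (l + 1) := fun l hl => if_neg (by omega)
      have huN : rot N (x 0) x (N - 1) = x 0 := if_pos rfl
      have hI0 : Ind (fun l => phi (rot N (x 0) x l)) (Ico 0 (N - 1)) :=
        (hI.comp (s := Ico 0 (N - 1)) (fun l => l + 1) (fun _ _ _ _ _ => by omega)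
          fun l hl => by rw [mem_Ico] at hl ⊢; omega).congr fun l hl => by
            rw [mem_Ico] at hl
            rw [hu l (by omega)]
      have hx0 : phi (x 0) = phi (x 1) + phi (x (L - 2)) + phi (x (L - 1)) := by
        rw [← add_eq_zero_two, ← hrel]; abel
      have hI1 : Ind (fun l => phi (rot N (x 0) x l)) (Ico 1 N) := by
        intro R hR h0
        obtain ⟨f, hf⟩ := hI.exists_functional (fun l => if l = 1 then 1 else 0)
        have hNR : N - 1 ∉ R := by
          intro hNR
          have h1 := congrArg f h0
          rw [map_sum, map_zero, sum_eq_single_of_mem _ hNR, huN, hx0, map_add, map_add,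
            hf _ (mem_Ico.2 (by omega)), hf _ (mem_Ico.2 (by omega)),
            hf _ (mem_Ico.2 (by omega)), if_pos rfl, if_neg (by omega), if_neg (by omega)] at h1
          · exact absurd h1 (by decide)
          · intro l hl hne
            have := mem_Ico.1 (hR hl)
            rw [hu l (by omega), hf _ (mem_Ico.2 (by omega)), if_neg (by omega)]
        refine hI0 R (fun l hl => ?_) h0
        have h1 := mem_Ico.1 (hR hl)
        have h2 : l ≠ N - 1 := fun h3 => hNR (h3 ▸ hl)
        rw [mem_Ico]
        omega
      have hd : ¬ Ind (fun l => phi (rot N (x 0) x l)) (Ico 0 N) := by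
        intro hI'
        have h1 := hI' {0, L - 3, L - 2, N - 1} (fun l hl => by
          simp only [mem_insert, mem_singleton] at hl
          rw [mem_Ico]
          omega) (by
          rw [sum_insert (by simp; omega), sum_insert (by simp; omega), sum_pair (by omega),
            hu _ (by omega), hu _ (by omega), hu _ (by omega), huN, ← hrel,
            show L - 3 + 1 = L - 2 by omega, show L - 2 + 1 = L - 1 by omega]
          abel)
        exact absurd h1 (by simp)
      have hw := hg.window hc hS hx' hI0 hI1 hd
      have hwrel := hw.rel
      rw [hu _ (by omega), hu _ (by omega), hu _ (by omega), huN,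
        show N - 2 + 1 = N - 1 by omega] at hwrel
      have hNL : N = L := by
        by_contra hNL
        obtain ⟨f, hf⟩ := hI.exists_functional (fun l => if l = N - 1 then 1 else 0)
        have h1 := congrArg f hwrel
        rw [hx0] at h1
        simp only [map_add, map_zero] at h1
        rw [hf _ (mem_Ico.2 (by omega)), hf _ (mem_Ico.2 (by omega)),
            hf _ (mem_Ico.2 (by omega)), hf _ (mem_Ico.2 (by omega)),
            hf _ (mem_Ico.2 (by omega)), if_neg (by omega), if_neg (by omega), if_pos rfl,
            if_neg (by omega), if_neg (by omega)] at h1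
        exact absurd h1 (by decide)
      subst hNL
      refine Or.inr ⟨rfl, ?_, hw⟩
      exact (add_eq_zero_two.1 hwrel).symm
    · exact (hg.not_closing hS hx hL hLN hrel hI (by omega) (by omega) hadj).elim

/-- Every edge of the subgraph `S` can be continued at both of its ends, but no nonempty part of
`S` is a union of cycles and closed under continuation. -/
structure Obstruction (h : Fin 2 → (Fin c → A) → G) (S : Finset (Fin c → A)) : Prop where
  exists_ne : ∀ x ∈ S, ∀ p, ∃ y ∈ S, y ≠ x ∧ h p y = h p x
  not_cycle : ∀ C ⊆ S, C.Nonempty →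
    ¬ ∀ x ∈ C, ∀ p, ∃ y ∈ C, ∀ z ∈ S, h p z = h p x → z = x ∨ z = y

/-- By `Good.step`, a trail reaching beyond its initial relation could be prolonged forever. -/
lemma Good.no_tail (hg : Good h X D) (hc : 1 ≤ c) (hS : S ⊆ X) (ho : Obstruction h S)
    (hL : 4 ≤ L) :
    ∀ k N, #S + 1 - N = k → L < N → ∀ x, Trail h S N e x →
      phi (x 0) + phi (x 1) + phi (x (L - 2)) + phi (x (L - 1)) = 0 →
      ¬ Ind (fun l => phi (x l)) (Ico 1 N) := by
  intro k
  induction k with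
  | zero =>
    intro N hN hLN x hx
    have := hx.length_le
    omega
  | succ k ih =>
    intro N hN hLN x hx hrel hI
    obtain ⟨y, hy, hne, hadj⟩ := ho.exists_ne (x (N - 1)) (hx.mem _ (by omega)) (hh (e + (N - 1)))
    rcases hg.step hc hS hx hL hLN.le hrel hI hy hne hadj with ⟨hx', hI'⟩ | ⟨hNL, -⟩
    · refine ih (N + 1) (by omega) (by omega) _ hx' ?_ hI'
      rw [Function.update_of_ne (by omega), Function.update_of_ne (by omega),
        Function.update_of_ne (by omega), Function.update_of_ne (by omega), hrel]
    · omega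

/-- A nonempty family of trails closed under reversal and under forced continuation would
sweep out a union of cycles. -/
lemma Obstruction.no_rotation (ho : Obstruction h S) (W : ℕ → (ℕ → Fin c → A) → Prop)
    (hL : 1 ≤ L) (hne : ∃ e x, W e x) (htr : ∀ e x, W e x → Trail h S L e x)
    (hrev : ∀ e x, W e x → W (e + L) (fun l => x (L - 1 - l)))
    (hstep : ∀ e x, W e x → ∃ y, (∀ z ∈ S,
      h (hh (e + (L - 1))) z = h (hh (e + (L - 1))) (x (L - 1)) → z = x (L - 1) ∨ z = y) ∧
      W (e + 1) (rot L y x)) : False := by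
  classical
  let C := S.filter fun z => ∃ e x, W e x ∧ ∃ l < L, x l = z
  have hfront : ∀ e x, W e x → ∀ k < L, ∃ x', W (e + k) x' ∧ ∀ l, l + k < L → x' l = x (l + k) := by
    intro e x hx k
    induction k with
    | zero => exact fun _ => ⟨x, hx, fun l _ => rfl⟩
    | succ k ih =>
      intro hk
      obtain ⟨x', hx', hxx⟩ := ih (by omega)
      obtain ⟨y, -, hy⟩ := hstep _ _ hx'
      refine ⟨_, hy, fun l hl => ?_⟩
      rw [rot, if_neg (by omega), hxx _ (by omega)]
      congr 1
      omega
  have hlast : ∀ e x, W e x → ∀ k < L, ∃ e' x', W e' x' ∧ x' (L - 1) = x k ∧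
      (e' + (L - 1)) % 2 = (e + k + 1) % 2 := by
    intro e x hx k hk
    obtain ⟨x', hx', hxx⟩ := hfront e x hx k hk
    refine ⟨_, _, hrev _ _ hx', ?_, by omega⟩
    rw [Nat.sub_self, hxx 0 (by omega), Nat.zero_add]
  have hany : ∀ z ∈ C, ∀ p, ∃ e x, W e x ∧ x (L - 1) = z ∧ hh (e + (L - 1)) = p := by
    intro z hz p
    obtain ⟨e, x, hx, k, hk, rfl⟩ := (mem_filter.1 hz).2
    obtain ⟨q, rfl⟩ : ∃ q, hh q = p := by
      fin_cases p
      · exact ⟨0, rfl⟩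
      · exact ⟨1, rfl⟩
    by_cases hq : (e + k + 1) % 2 = q % 2
    · obtain ⟨e', x', hx', hl, hp⟩ := hlast e x hx k hk
      exact ⟨e', x', hx', hl, hh_eq_iff.2 (by omega)⟩
    · obtain ⟨e', x', hx', hl, hp⟩ := hlast _ _ (hrev e x hx) (L - 1 - k) (by omega)
      refine ⟨e', x', hx', ?_, hh_eq_iff.2 (by omega)⟩
      rw [hl, show L - 1 - (L - 1 - k) = k by omega]
  have hC : ∀ {e x l}, W e x → l < L → x l ∈ C := fun {e x l} hx hl =>
    mem_filter.2 ⟨(htr _ _ hx).mem l hl, e, x, hx, l, hl, rfl⟩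
  refine ho.not_cycle C (filter_subset _ _) ?_ fun z hz p => ?_
  · obtain ⟨e, x, hx⟩ := hne
    exact ⟨x 0, hC hx (by omega)⟩
  · obtain ⟨e, x, hx, rfl, rfl⟩ := hany z hz p
    obtain ⟨y, hy, hxy⟩ := hstep e x hx
    refine ⟨y, ?_, hy⟩
    have := hC hxy (l := L - 1) (by omega)
    rwa [rot, if_pos rfl] at this

lemma Window.reverse (hw : Window h S L e x) : Window h S L (e + L) (fun l => x (L - 1 - l)) := by
  have h4 := hw.four_le
  refine ⟨hw.trail.reverse, ?_, ?_, hw.even, h4, ?_⟩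
  · exact hw.ind_right.comp (fun l => L - 1 - l)
      (fun k hk l hl _ => by rw [mem_Ico] at hk hl; omega)
      fun l hl => by rw [mem_Ico] at hl ⊢; omega
  · exact hw.ind_left.comp (fun l => L - 1 - l)
      (fun k hk l hl _ => by rw [mem_Ico] at hk hl; omega)
      fun l hl => by rw [mem_Ico] at hl ⊢; omega
  · rw [← hw.rel, show L - 1 - (L - 1) = 0 by omega, show L - 1 - (L - 2) = 1 by omega,
      show L - 1 - 0 = L - 1 by omega, show L - 1 - 1 = L - 2 by omega]
    abel

lemma Good.no_window (hg : Good h X D) (hc : 1 ≤ c) (hS : S ⊆ X) (ho : Obstruction h S) :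
    ¬ Window h S L e x := by
  intro hw
  have h4 := hw.four_le
  refine ho.no_rotation (L := L) (Window h S L) (by omega) ⟨e, x, hw⟩ (fun _ _ h => h.trail)
    (fun _ _ h => h.reverse) fun e x hw => ?_
  have hall : ∀ z ∈ S, z ≠ x (L - 1) →
      h (hh (e + (L - 1))) z = h (hh (e + (L - 1))) (x (L - 1)) →
      phi z = phi (x 1) + phi (x 2) + phi (x (L - 1)) ∧ Window h S L (e + 1) (rot L z x) := by
    intro z hz hne hadj
    rcases hg.step hc hS hw.trail h4 le_rfl hw.rel hw.ind_right hz hne hadj with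
      ⟨hx', hI'⟩ | ⟨-, h1⟩
    · refine absurd hI' (hg.no_tail hc hS ho h4 _ (L + 1) rfl (by omega) _ hx' ?_)
      rw [Function.update_of_ne (by omega), Function.update_of_ne (by omega),
        Function.update_of_ne (by omega), Function.update_of_ne (by omega), hw.rel]
    · exact h1
  obtain ⟨y, hy, hne, hadj⟩ :=
    ho.exists_ne (x (L - 1)) (hw.trail.mem _ (by omega)) (hh (e + (L - 1)))
  have hy' := hall y hy hne hadj
  refine ⟨y, fun z hz hzadj => ?_, hy'.2⟩
  by_cases hz1 : z = x (L - 1)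
  · exact Or.inl hz1
  · exact Or.inr (phi_injective ((hall z hz hz1 hzadj).1.trans hy'.1.symm))

lemma Good.ind_trail (hg : Good h X D) (hc : 1 ≤ c) (hS : S ⊆ X) (ho : Obstruction h S)
    (hx : Trail h S L e x) : Ind (fun l => phi (x l)) (Ico 0 L) := by
  induction L with
  | zero =>
    intro R hR _
    rw [Ico_self] at hR
    exact subset_empty.1 hR
  | succ L ih =>
    by_contra hd
    obtain ⟨i, -, -, hw⟩ := hg.exists_window hc hS hx (Nat.zero_le _)
      (ih (hx.mono (Nat.le_succ L))) hd
    exact hg.no_window hc hS ho hw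

/-- Deterministic core of the argument: consider longest trails. Both of their ends can only be
continued back into the trail, which gives a forbidden pair of cycles, unless all longest trails
close up to cycles, which is excluded by `Obstruction.no_rotation`. -/
lemma Good.not_obstruction (hg : Good h X D) (hc : 1 ≤ c) (hS : S ⊆ X) (hne : S.Nonempty) :
    ¬ Obstruction h S := by
  classical
  intro ho
  obtain ⟨L, ⟨e₀, x₀, hx₀⟩, hmax⟩ : ∃ L, (∃ e x, Trail h S L e x) ∧
      ∀ N e x, Trail h S N e x → N ≤ L := by
    let P : ℕ → Prop := fun L => ∃ e x, Trail h S L e x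
    have hP0 : P (Nat.findGreatest P #S) :=
      Nat.findGreatest_spec (P := P) (Nat.zero_le _) (by
        obtain ⟨x, hx⟩ := hne
        exact ⟨0, fun _ => x, fun l hl => by omega, fun l hl => by omega, fun l hl => by omega⟩)
    exact ⟨_, hP0, fun N e x hx => Nat.le_findGreatest hx.length_le ⟨e, x, hx⟩⟩
  have hL1 : 1 ≤ L := by
    obtain ⟨x, hx⟩ := hne
    exact hmax 1 0 (fun _ => x) ⟨fun _ _ => hx, fun l hl l' hl' _ => by omega,
      fun l hl => by omega⟩
  have hback : ∀ e x, Trail h S L e x → ∀ z ∈ S, z ≠ x (L - 1) →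
      h (hh (e + (L - 1))) z = h (hh (e + (L - 1))) (x (L - 1)) → ∃ t < L - 1, x t = z := by
    intro e x hx z hz hne hadj
    by_contra hnew
    push Not at hnew
    have := hmax _ _ _ (hx.snoc hL1 hz (fun l hl => ?_) hadj)
    · omega
    · by_cases hl1 : l = L - 1
      · rw [hl1]; exact hne.symm
      · exact hnew l (by omega)
  refine ho.no_rotation (L := L) (Trail h S L) hL1 ⟨e₀, x₀, hx₀⟩ (fun _ _ h => h)
    (fun _ _ h => h.reverse) fun e x hx => ?_
  have hI := hg.ind_trail hc hS ho hx
  obtain ⟨s, hs0, hsL, hs⟩ : ∃ s, 0 < s ∧ s < L ∧ h (hh (e + 1)) (x s) = h (hh (e + 1)) (x 0) := by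
    obtain ⟨z, hz, hzne, hadj⟩ := ho.exists_ne (x 0) (hx.mem _ (by omega)) (hh (e + 1))
    have hpar : hh (e + L + (L - 1)) = hh (e + 1) := hh_eq_iff.2 (by omega)
    obtain ⟨t, ht, rfl⟩ := hback _ _ hx.reverse z hz (by rwa [Nat.sub_self])
      (by rwa [Nat.sub_self, hpar])
    exact ⟨L - 1 - t, by omega, by omega, hadj⟩
  have hzero : ∀ z ∈ S, z ≠ x (L - 1) →
      h (hh (e + (L - 1))) z = h (hh (e + (L - 1))) (x (L - 1)) → z = x 0 := by
    intro z hz hne hadj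
    obtain ⟨t, ht, rfl⟩ := hback e x hx z hz hne hadj
    by_contra ht0
    exact hg.not_two_cycles hS hx hI ht hs0 hsL (Or.inl fun h1 => ht0 (by rw [h1])) hadj hs
  obtain ⟨z, hz, hzne, hadj⟩ := ho.exists_ne (x (L - 1)) (hx.mem _ (by omega)) (hh (e + (L - 1)))
  obtain rfl := hzero z hz hzne hadj
  refine ⟨x 0, fun w hw hwadj => ?_, hx.rot (by omega) hadj⟩
  by_cases hw1 : w = x (L - 1)
  · exact Or.inl hw1
  · exact Or.inr (hzero w hw hw1 hwadj)

/-- If the keys of `X` cannot be placed, a minimal set violating Hall's condition is an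
obstruction. -/
lemma exists_obstruction [DecidableEq G] (h : Fin 2 → (Fin c → A) → G) (X : Finset (Fin c → A))
    (hX : ¬ ∃ σ : (Fin c → A) → Fin 2, Set.InjOn (fun x => (h (σ x) x, σ x)) X) :
    ∃ S ⊆ X, S.Nonempty ∧ Obstruction h S := by
  classical
  let nb : Finset (Fin c → A) → Finset (G × Fin 2) := fun S =>
    S.biUnion fun x => univ.image fun p => (h p x, p)
  have hviol : ∃ S ⊆ X, #(nb S) < #S := by
    by_contra hno
    push Not at hno
    apply hX
    have hall := (Finset.all_card_le_biUnion_card_iff_exists_injective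
      (fun x : X => univ.image fun p : Fin 2 => (h p x, p))).1 (by
        intro s
        have h1 := hno (s.map (Function.Embedding.subtype _)) (by
          intro x hx
          obtain ⟨y, -, rfl⟩ := mem_map.1 hx
          exact y.2)
        rw [card_map] at h1
        refine h1.trans (le_of_eq ?_)
        congr 1
        simp only [nb, map_eq_image, image_biUnion]
        rfl)
    obtain ⟨f, hf, hfm⟩ := hall
    refine ⟨fun x => if hx : x ∈ X then (f ⟨x, hx⟩).2 else 0, ?_⟩
    have hval : ∀ x (hx : x ∈ X), (h (f ⟨x, hx⟩).2 x, (f ⟨x, hx⟩).2) = f ⟨x, hx⟩ := by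
      intro x hx
      obtain ⟨p, -, hp⟩ := mem_image.1 (hfm ⟨x, hx⟩)
      rw [← hp]
    intro x hx y hy hxy
    have hx' : x ∈ X := hx
    have hy' : y ∈ X := hy
    simp only [hx', hy', dif_pos] at hxy
    rw [hval x hx', hval y hy'] at hxy
    exact congrArg Subtype.val (hf hxy)
  obtain ⟨S₁, hS₁, hlt₁⟩ := hviol
  obtain ⟨S, hSmem, hmin⟩ := exists_min_image (X.powerset.filter fun S => #(nb S) < #S) card
    ⟨S₁, mem_filter.2 ⟨mem_powerset.2 hS₁, hlt₁⟩⟩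
  obtain ⟨hSX, hlt⟩ := mem_filter.1 hSmem
  rw [mem_powerset] at hSX
  have hmin' : ∀ S' ⊆ S, S' ≠ S → #S' ≤ #(nb S') := by
    intro S' hS' hne
    by_contra hlt'
    have h1 := hmin S' (mem_filter.2 ⟨mem_powerset.2 (hS'.trans hSX), by omega⟩)
    exact hne (eq_of_subset_of_card_le hS' h1)
  have hmem : ∀ (S : Finset (Fin c → A)) (v : G) (p : Fin 2),
      (v, p) ∈ nb S ↔ ∃ x ∈ S, h p x = v := by
    intro S v p
    simp only [nb, mem_biUnion, mem_image, mem_univ, true_and, Prod.mk.injEq]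
    constructor
    · rintro ⟨x, hx, q, hq, rfl⟩
      exact ⟨x, hx, hq⟩
    · rintro ⟨x, hx, hv⟩
      exact ⟨x, hx, p, hv, rfl⟩
  refine ⟨S, hSX, card_pos.1 (by omega), ⟨fun x hx p => ?_, fun C hCS hC hcyc => ?_⟩⟩
  · by_contra hno
    push Not at hno
    -- Otherwise `x` could be removed together with its private bin.
    have h1 := hmin' (S.erase x) (erase_subset _ _) (fun h2 => by
      rw [← h2] at hx
      exact absurd hx (notMem_erase _ _))
    have h2 : nb (S.erase x) ⊆ (nb S).erase (h p x, p) := by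
      rintro ⟨v, q⟩ hv
      obtain ⟨y, hy, rfl⟩ := (hmem _ _ _).1 hv
      rw [mem_erase] at hy ⊢
      refine ⟨fun h3 => ?_, (hmem _ _ _).2 ⟨y, hy.2, rfl⟩⟩
      rw [Prod.mk.injEq] at h3
      obtain ⟨h4, rfl⟩ := h3
      exact hno y hy.2 hy.1 h4
    have h3 := card_le_card h2
    rw [card_erase_of_mem ((hmem _ _ _).2 ⟨x, hx, rfl⟩)] at h3
    rw [card_erase_of_mem hx] at h1
    have h4 := card_pos.2 ⟨_, (hmem S (h p x) p).2 ⟨x, hx, rfl⟩⟩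
    have h5 := card_pos.2 ⟨x, hx⟩
    omega
  · -- The part `C` uses at least `#C` bins, none of which is used by the rest of `S`.
    have hC2 : #C ≤ #(nb C) := by
      have hfib : 2 * #C ≤ 2 * #(nb C) := by
        calc 2 * #C = #(C ×ˢ (univ : Finset (Fin 2))) := by
              rw [card_product]; simp [mul_comm]
          _ ≤ 2 * #(nb C) := by
              refine card_le_mul_card_image_of_maps_to (f := fun q => (h q.2 q.1, q.2))
                (fun q hq => (hmem _ _ _).2 ⟨q.1, (mem_product.1 hq).1, rfl⟩) 2 ?_
              rintro ⟨v, p⟩ hv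
              obtain ⟨x, hx, rfl⟩ := (hmem _ _ _).1 hv
              obtain ⟨y, -, hy⟩ := hcyc x hx p
              refine (card_le_card (t := {(x, p), (y, p)}) ?_).trans card_le_two
              rintro ⟨z, q⟩ hz
              simp only [mem_filter, mem_product, mem_univ, and_true, Prod.mk.injEq] at hz
              obtain ⟨hz, hv, rfl⟩ := hz
              rcases hy z (hCS hz) hv with rfl | rfl <;> simp
      omega
    have hdisj : nb (S \ C) ⊆ nb S \ nb C := by
      rintro ⟨v, p⟩ hv
      obtain ⟨z, hz, rfl⟩ := (hmem _ _ _).1 hv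
      rw [mem_sdiff] at hz
      refine mem_sdiff.2 ⟨(hmem _ _ _).2 ⟨z, hz.1, rfl⟩, fun h1 => hz.2 ?_⟩
      obtain ⟨x, hx, hxz⟩ := (hmem _ _ _).1 h1
      obtain ⟨y, hy, hxy⟩ := hcyc x hx p
      rcases hxy z hz.1 hxz.symm with rfl | rfl
      · exact hx
      · exact hy
    have hsub : nb C ⊆ nb S := by
      rintro ⟨v, p⟩ hv
      obtain ⟨z, hz, rfl⟩ := (hmem _ _ _).1 hv
      exact (hmem _ _ _).2 ⟨z, hCS hz, rfl⟩
    have h1 := hmin' (S \ C) sdiff_subset (fun h2 => by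
      obtain ⟨x, hx⟩ := hC
      have := hCS hx
      rw [← h2, mem_sdiff] at this
      exact this.2 hx)
    have h2 := card_le_card hdisj
    rw [card_sdiff_of_subset hsub] at h2
    rw [card_sdiff_of_subset hCS] at h1
    have h3 := card_le_card hsub
    have h4 := card_le_card hCS
    omega

lemma Good.exists_placement [DecidableEq G] (hg : Good h X D) (hc : 1 ≤ c) :
    ∃ σ : (Fin c → A) → Fin 2, Set.InjOn (fun x => (h (σ x) x, σ x)) X := by
  by_contra hX
  obtain ⟨S, hS, hne, ho⟩ := exists_obstruction h X hX
  exact hg.not_obstruction hc hS hne ho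

end Main

/-! ### Probabilities of the exceptional configurations -/

section Probability

variable {c b : ℕ} {A : Type*} [Fintype A] [DecidableEq A]

lemma mem_event {α : Type*} [Fintype α] {p : α → Prop} {_ : DecidablePred p} {a : α} :
    a ∈ filter p univ ↔ p a := mem_filter_univ a

open Classical in
/-- The probability of an event under uniformly random tables for the two hash functions. -/
noncomputable def prob (E : (Fin 2 → Fin c → A → (Fin b → ZMod 2)) → Prop) : ℝ :=
  #{T | E T} / (Fintype.card (Fin 2 → Fin c → A → (Fin b → ZMod 2)) : ℝ)

lemma prob_mono {E F : (Fin 2 → Fin c → A → (Fin b → ZMod 2)) → Prop} (h : ∀ T, E T → F T) :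
    prob E ≤ prob F := by
  unfold prob
  gcongr with T
  exact h T

lemma prob_exists_le {ι : Type*} (s : Finset ι)
    (E : ι → (Fin 2 → Fin c → A → (Fin b → ZMod 2)) → Prop) :
    prob (fun T => ∃ i ∈ s, E i T) ≤ ∑ i ∈ s, prob (E i) := by
  classical
  unfold prob
  rw [← sum_div]
  gcongr
  rw [← Nat.cast_sum]
  refine Nat.cast_le.2 (le_trans (card_le_card fun T hT => ?_) (card_biUnion_le (s := s)
    (t := fun i => ({T | E i T} : Finset (Fin 2 → Fin c → A → (Fin b → ZMod 2))))))
  obtain ⟨i, hi, hT⟩ := mem_event.1 hT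
  exact mem_biUnion.2 ⟨i, hi, mem_filter.2 ⟨mem_univ _, hT⟩⟩

lemma prob_or_le (E F : (Fin 2 → Fin c → A → (Fin b → ZMod 2)) → Prop) :
    prob (fun T => E T ∨ F T) ≤ prob E + prob F := by
  classical
  unfold prob
  rw [← add_div, ← Nat.cast_add]
  gcongr
  refine le_trans (card_le_card fun T hT => ?_) (card_union_le _ _)
  rw [mem_union, mem_event, mem_event]
  exact (mem_event (p := fun T => E T ∨ F T)).1 hT

lemma prob_solutions_le {w : ℕ → Fin 2 → Fin c → A → ZMod 2} {n : ℕ} (h : Ind w (range n)) :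
    prob (fun T : Fin 2 → Fin c → A → (Fin b → ZMod 2) => ∀ k < n, hfull T (w k) = 0) ≤
      1 / ((2 : ℝ) ^ b) ^ n := by
  have h1 := card_solutions_le (b := b) w n h
  unfold prob
  rw [div_le_div_iff₀ (by exact_mod_cast Fintype.card_pos) (by positivity), one_mul]
  convert (Nat.cast_le (α := ℝ)).2 h1
  push_cast
  congr

/-- The union bound over `p` and over `y ∈ Q` for systems of `n` independent constraints. -/
lemma prob_systems_le {P Y : Type*} [Fintype P] (Q : Finset Y)
    (w : P → Y → ℕ → Fin 2 → Fin c → A → ZMod 2) (n : ℕ) :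
    prob (fun T : Fin 2 → Fin c → A → (Fin b → ZMod 2) => ∃ p, ∃ y ∈ Q,
      Ind (w p y) (range n) ∧ ∀ k < n, hfull T (w p y k) = 0) ≤
      Fintype.card P * #Q / ((2 : ℝ) ^ b) ^ n := by
  calc _ ≤ prob (fun T : Fin 2 → Fin c → A → (Fin b → ZMod 2) =>
          ∃ q ∈ (univ : Finset P) ×ˢ Q,
            Ind (w q.1 q.2) (range n) ∧ ∀ k < n, hfull T (w q.1 q.2 k) = 0) := by
        apply prob_mono
        rintro T ⟨p, y, hy, hT⟩
        exact ⟨(p, y), mem_product.2 ⟨mem_univ _, hy⟩, hT⟩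
    _ ≤ ∑ q ∈ (univ : Finset P) ×ˢ Q, prob (fun T : Fin 2 → Fin c → A → (Fin b → ZMod 2) =>
            Ind (w q.1 q.2) (range n) ∧ ∀ k < n, hfull T (w q.1 q.2 k) = 0) :=
        prob_exists_le _ _
    _ ≤ ∑ q ∈ (univ : Finset P) ×ˢ Q, 1 / ((2 : ℝ) ^ b) ^ n := by
        refine sum_le_sum fun q _ => ?_
        by_cases hI : Ind (w q.1 q.2) (range n)
        · exact (prob_mono fun T hT => hT.2).trans (prob_solutions_le hI)
        · have : prob (fun T : Fin 2 → Fin c → A → (Fin b → ZMod 2) =>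
              Ind (w q.1 q.2) (range n) ∧ ∀ k < n, hfull T (w q.1 q.2 k) = 0) = 0 := by
            simp [prob, hI]
          rw [this]
          positivity
    _ = _ := by
        rw [sum_const, nsmul_eq_mul, card_product, card_univ]
        push_cast
        ring

lemma pvec_pat_mod {M e lo t s k : ℕ} (x : ℕ → Fin c → A) :
    pvec x (pat M (e % 2) lo t s k) = pvec x (pat M e lo t s k) := by
  unfold pat pvec
  split_ifs <;> simp only <;> congr 1 <;> exact hh_eq_iff.2 (by omega)

lemma pat_lt {M e lo t s k : ℕ} (ht : t < M) (hs : s < M) :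
    (pat M e lo t s k).2.1 < M ∧ (pat M e lo t s k).2.2 < M := by
  unfold pat
  split_ifs
  · dsimp only; omega
  · dsimp only; omega
  · dsimp only; omega

/-- The union bound over the shapes `pat` and the tuples of keys satisfying `P`, which belong
to `Q`. -/
lemma prob_cert_le (X : Finset (Fin c → A)) {M n : ℕ} (hM : 0 < M)
    (P : (ℕ → Fin c → A) → Prop) (Q : Finset (Fin M → Fin c → A))
    (hQ : ∀ x, (∀ l < M, x l ∈ X) → P x → (fun l : Fin M => x l) ∈ Q) :
    prob (fun T : Fin 2 → Fin c → A → (Fin b → ZMod 2) =>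
      ∃ x, P x ∧ Cert (fun p => simpleTab (T p)) X M n x) ≤
      4 * (M : ℝ) ^ 2 * #Q / ((2 : ℝ) ^ b) ^ n := by
  let ex : (Fin M → Fin c → A) → ℕ → Fin c → A := fun y l => y ⟨l % M, Nat.mod_lt _ hM⟩
  have h1 := prob_systems_le (b := b) (P := Fin 2 × Fin 2 × Fin M × Fin M) Q
    (fun p y k => pvec (ex y) (pat M p.1 p.2.1 p.2.2.1 p.2.2.2 k)) n
  refine (prob_mono ?_).trans (h1.trans (le_of_eq ?_))
  · rintro T ⟨x, hP, e, lo, t, s, hlo, ht, hs, hX, -, hI, hT⟩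
    refine ⟨(⟨e % 2, by omega⟩, ⟨lo, hlo⟩, ⟨t, ht⟩, ⟨s, hs⟩), fun l => x l, hQ x hX hP, ?_⟩
    have hw : ∀ k, pvec (ex fun l => x l) (pat M (e % 2) lo t s k) =
        pvec x (pat M e lo t s k) := by
      intro k
      rw [pvec_pat_mod]
      obtain ⟨h1, h2⟩ := pat_lt (e := e) (lo := lo) (k := k) ht hs
      simp only [pvec, ex, Nat.mod_eq_of_lt h1, Nat.mod_eq_of_lt h2]
    simp only [hw]
    exact ⟨hI, fun k hk => hfull_cvec T _ _ _ (hT k hk)⟩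
  · simp only [Fintype.card_prod, Fintype.card_fin]
    push_cast
    ring

lemma Covers.le_card_cov {ι : Type*} [Fintype ι] [DecidableEq ι] {x : ℕ → Fin c → A}
    {J : Finset ℕ} {β : ℕ} (h : Covers x J β) (f : ι → ℕ) (hf : ∀ l ∈ J, ∃ i, f i = l) :
    β ≤ #(cov fun i => x (f i)) := by
  obtain ⟨K, hKJ, hβ, hK⟩ := h
  refine hβ.trans (le_trans (card_le_card fun l hl => ?_) (card_image_le (f := f)))
  obtain ⟨k, rfl⟩ := hf l (hKJ hl)
  refine mem_image.2 ⟨k, ?_, rfl⟩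
  rw [cov, mem_filter]
  refine ⟨mem_univ _, fun i => ?_⟩
  obtain ⟨l', hl', hne, heq⟩ := hK _ hl i
  obtain ⟨k', rfl⟩ := hf l' hl'
  exact ⟨k', fun h1 => hne (by rw [h1]), heq⟩

lemma prob_covers_le (X : Finset (Fin c → A)) {M n β : ℕ} (hM : 0 < M) :
    prob (fun T : Fin 2 → Fin c → A → (Fin b → ZMod 2) =>
      ∃ x, Covers x (range M) β ∧ Cert (fun p => simpleTab (T p)) X M n x) ≤
      4 * (M : ℝ) ^ 2 * ((M : ℝ) ^ (β * (c + 1)) * ((#X : ℝ) ^ (M - β) * √(#X : ℝ) ^ β)) /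
        ((2 : ℝ) ^ b) ^ n := by
  classical
  refine (prob_cert_le X hM _ {y : Fin M → Fin c → A | (∀ l, y l ∈ X) ∧ β ≤ #(cov y)}
    fun x hX hP => ?_).trans ?_
  · rw [mem_filter]
    exact ⟨mem_univ _, fun l => hX l l.2, hP.le_card_cov (fun l : Fin M => (l : ℕ))
      fun l hl => ⟨⟨l, mem_range.1 hl⟩, rfl⟩⟩
  · gcongr
    have := card_cov_le (ι := Fin M) X β
    rw [Fintype.card_fin] at this
    refine le_trans (le_of_eq ?_) this
    congr

/-- Two keys whose sum is prescribed, with few representations, by the remaining ones. -/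
lemma card_light_le (X : Finset (Fin c → A)) {D : ℝ} (hD : 0 ≤ D) {M : ℕ} (a b u v : Fin M)
    (hab : a ≠ b) (hua : u ≠ a) (hub : u ≠ b) (hva : v ≠ a) (hvb : v ≠ b)
    (Q : Finset (Fin M → Fin c → A))
    (hQ : ∀ y ∈ Q, (∀ l, y l ∈ X) ∧ phi (y a) + phi (y b) = phi (y u) + phi (y v) ∧
      (mult X (phi (y u) + phi (y v)) : ℝ) ≤ D ∧
      4 ≤ #(cov fun i : (({a, b} : Finset (Fin M))ᶜ : Finset (Fin M)) => y i)) :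
    (#Q : ℝ) ≤ (M : ℝ) ^ (4 * (c + 1)) * ((#X : ℝ) ^ (M - 6) * √(#X : ℝ) ^ 4) * D := by
  classical
  let ι := (({a, b} : Finset (Fin M))ᶜ : Finset (Fin M))
  have hι : Fintype.card ι = M - 2 := by
    rw [Fintype.card_coe, card_compl, card_pair hab, Fintype.card_fin]
  have hmem : ∀ l : Fin M, l ≠ a → l ≠ b → l ∈ ι := fun l h1 h2 => by simp [ι, h1, h2]
  let ρ : (Fin M → Fin c → A) → ι → Fin c → A := fun y i => y i
  let Q' : Finset (ι → Fin c → A) := {z | (∀ l, z l ∈ X) ∧ 4 ≤ #(cov z)}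
  have hmap : ∀ y ∈ Q, ρ y ∈ Q' := fun y hy =>
    mem_filter.2 ⟨mem_univ _, fun l => (hQ y hy).1 l, (hQ y hy).2.2.2⟩
  have hfib : ∀ z ∈ Q', (#{y ∈ Q | ρ y = z} : ℝ) ≤ D := by
    intro z _
    rcases ({y ∈ Q | ρ y = z}).eq_empty_or_nonempty with h0 | ⟨y₀, hy₀⟩
    · rw [h0]; simpa using hD
    · obtain ⟨hyQ, rfl⟩ := mem_filter.1 hy₀
      refine le_trans ?_ (hQ y₀ hyQ).2.2.1
      rw [Nat.cast_le, mult]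
      refine card_le_card_of_injOn (fun y => (y a, y b)) (fun y hy => ?_) fun y hy y' hy' heq => ?_
      · obtain ⟨hy, hρ⟩ := mem_filter.1 hy
        have h1 := hQ y hy
        rw [mem_coe, mem_filter, mem_product]
        refine ⟨⟨h1.1 a, h1.1 b⟩, ?_⟩
        have hu : y u = y₀ u := congrFun hρ ⟨u, hmem u hua hub⟩
        have hv : y v = y₀ v := congrFun hρ ⟨v, hmem v hva hvb⟩
        rw [← hu, ← hv]
        exact h1.2.1
      · rw [Prod.mk.injEq] at heq
        have h1 := ((mem_filter.1 hy).2).trans ((mem_filter.1 hy').2).symm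
        funext l
        by_cases hla : l = a
        · rw [hla, heq.1]
        · by_cases hlb : l = b
          · rw [hlb, heq.2]
          · exact congrFun h1 ⟨l, hmem l hla hlb⟩
  have hQ' := card_cov_le (ι := ι) X 4
  rw [hι, show M - 2 - 4 = M - 6 by omega] at hQ'
  calc (#Q : ℝ) = ∑ z ∈ Q', (#{y ∈ Q | ρ y = z} : ℝ) := by
        exact_mod_cast card_eq_sum_card_fiberwise hmap
    _ ≤ ∑ z ∈ Q', D := sum_le_sum hfib
    _ = #Q' * D := by rw [sum_const, nsmul_eq_mul]
    _ ≤ ((M - 2 : ℕ) : ℝ) ^ (4 * (c + 1)) * ((#X : ℝ) ^ (M - 6) * √(#X : ℝ) ^ 4) * D := by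
        gcongr
    _ ≤ _ := by
        gcongr
        omega

end Probability

section Probability

variable {c b : ℕ} {A : Type*} [Fintype A] [DecidableEq A]

lemma prob_light_le (X : Finset (Fin c → A)) {D : ℝ} (hD : 0 ≤ D) {M : ℕ} (hM : 0 < M) :
    prob (fun T : Fin 2 → Fin c → A → (Fin b → ZMod 2) =>
      ∃ x, LightCovers X D x M ∧ Cert (fun p => simpleTab (T p)) X M (M - 3) x) ≤
      4 * (M : ℝ) ^ 2 * ((M : ℝ) ^ 4 *
        ((M : ℝ) ^ (4 * (c + 1)) * ((#X : ℝ) ^ (M - 6) * √(#X : ℝ) ^ 4) * D)) /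
        ((2 : ℝ) ^ b) ^ (M - 3) := by
  classical
  let Q : Fin M × Fin M × Fin M × Fin M → Finset (Fin M → Fin c → A) := fun q =>
    {y | (q.1 ≠ q.2.1 ∧ q.2.2.1 ≠ q.1 ∧ q.2.2.1 ≠ q.2.1 ∧ q.2.2.2 ≠ q.1 ∧ q.2.2.2 ≠ q.2.1) ∧
      (∀ l, y l ∈ X) ∧ phi (y q.1) + phi (y q.2.1) = phi (y q.2.2.1) + phi (y q.2.2.2) ∧
      (mult X (phi (y q.2.2.1) + phi (y q.2.2.2)) : ℝ) ≤ D ∧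
      4 ≤ #(cov fun i : (({q.1, q.2.1} : Finset (Fin M))ᶜ : Finset (Fin M)) => y i)}
  have hQ : ∀ q, (#(Q q) : ℝ) ≤
      (M : ℝ) ^ (4 * (c + 1)) * ((#X : ℝ) ^ (M - 6) * √(#X : ℝ) ^ 4) * D := by
    intro q
    by_cases hq : q.1 ≠ q.2.1 ∧ q.2.2.1 ≠ q.1 ∧ q.2.2.1 ≠ q.2.1 ∧ q.2.2.2 ≠ q.1 ∧ q.2.2.2 ≠ q.2.1
    · exact card_light_le X hD q.1 q.2.1 q.2.2.1 q.2.2.2 hq.1 hq.2.1 hq.2.2.1 hq.2.2.2.1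
        hq.2.2.2.2 (Q q) fun y hy => (mem_event.1 hy).2
    · have : Q q = ∅ := filter_eq_empty_iff.2 fun y _ hy => hq hy.1
      rw [this, card_empty, Nat.cast_zero]
      positivity
  have hcard : (#(univ.biUnion Q) : ℝ) ≤ (M : ℝ) ^ 4 *
      ((M : ℝ) ^ (4 * (c + 1)) * ((#X : ℝ) ^ (M - 6) * √(#X : ℝ) ^ 4) * D) := by
    calc (#(univ.biUnion Q) : ℝ) ≤ ∑ q, (#(Q q) : ℝ) := by exact_mod_cast card_biUnion_le
      _ ≤ ∑ q : Fin M × Fin M × Fin M × Fin M,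
          (M : ℝ) ^ (4 * (c + 1)) * ((#X : ℝ) ^ (M - 6) * √(#X : ℝ) ^ 4) * D :=
          sum_le_sum fun q _ => hQ q
      _ = _ := by
          rw [sum_const, nsmul_eq_mul, card_univ]
          simp only [Fintype.card_prod, Fintype.card_fin]
          push_cast
          ring
  refine (prob_cert_le X hM _ (univ.biUnion Q) fun x hX hP => ?_).trans (by gcongr)
  obtain ⟨a, b', u, v, ha, hb, hu, hv, hab, hua, hub, hva, hvb, hrel, hlight, hcov⟩ := hP
  refine mem_biUnion.2 ⟨(⟨a, ha⟩, ⟨b', hb⟩, ⟨u, hu⟩, ⟨v, hv⟩), mem_univ _, mem_event.2 ⟨?_, ?_⟩⟩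
  · simp only [ne_eq, Fin.mk.injEq]
    exact ⟨hab, hua, hub, hva, hvb⟩
  · refine ⟨fun l => hX l l.2, hrel, hlight, hcov.le_card_cov _ fun l hl => ?_⟩
    rw [mem_sdiff, mem_range, mem_insert, mem_singleton, not_or] at hl
    refine ⟨⟨⟨l, hl.1⟩, ?_⟩, rfl⟩
    simp only [mem_compl, mem_insert, mem_singleton, Fin.mk.injEq, not_or]
    exact hl.2

/-- Few vectors have many representations: the sum of the squared numbers of representations
counts relations between four keys. -/
lemma card_heavy_le (X : Finset (Fin c → A)) {D : ℝ} (hD : 0 < D) (H : Finset (Fin c → A → ZMod 2))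
    (hH : ∀ v ∈ H, D ≤ mult X v) :
    (#H : ℝ) ≤ 4 ^ (4 * (c + 1)) * √(#X : ℝ) ^ 4 / D ^ 2 := by
  classical
  let Z : Finset (Fin 4 → Fin c → A) := {y | (∀ l, y l ∈ X) ∧ 4 ≤ #(cov y)}
  have hZ : (#Z : ℝ) ≤ 4 ^ (4 * (c + 1)) * √(#X : ℝ) ^ 4 := by
    have := card_cov_le (ι := Fin 4) X 4
    rw [Fintype.card_fin, Nat.sub_self, pow_zero, one_mul] at this
    push_cast at this
    refine le_trans (le_of_eq ?_) this
    rw [Nat.cast_inj]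
    refine congrArg card (ext fun y => ?_)
    rw [mem_event, mem_event]
  let pairs : (Fin c → A → ZMod 2) → Finset ((Fin c → A) × (Fin c → A)) := fun v =>
    {p ∈ X ×ˢ X | phi p.1 + phi p.2 = v}
  have hpairs : ∀ {v p}, p ∈ pairs v ↔ (p.1 ∈ X ∧ p.2 ∈ X) ∧ phi p.1 + phi p.2 = v := by
    intro v p
    simp only [pairs, mem_filter, mem_product]
  have hsum : ∑ v ∈ H, mult X v ^ 2 ≤ #Z := by
    calc ∑ v ∈ H, mult X v ^ 2 = ∑ v ∈ H, #(pairs v ×ˢ pairs v) :=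
          sum_congr rfl fun v _ => by rw [card_product, sq]; rfl
      _ = #(H.sigma fun v => pairs v ×ˢ pairs v) := (card_sigma _ _).symm
      _ ≤ #Z := by
          refine card_le_card_of_injOn
            (fun s => ![s.2.1.1, s.2.1.2, s.2.2.1, s.2.2.2]) (fun s hs => ?_)
            fun s hs s' hs' heq => ?_
          · obtain ⟨h1, h2⟩ := mem_product.1 (mem_sigma.1 hs).2
            obtain ⟨⟨h3, h4⟩, h5⟩ := hpairs.1 h1
            obtain ⟨⟨h6, h7⟩, h8⟩ := hpairs.1 h2
            refine mem_event.2 ⟨?_, ?_⟩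
            · intro l
              fin_cases l
              exacts [h3, h4, h6, h7]
            · have hz : ∑ l ∈ (univ : Finset (Fin 4)),
                  phi (![s.2.1.1, s.2.1.2, s.2.2.1, s.2.2.2] l) = 0 := by
                rw [Fin.sum_univ_four]
                simp only [Matrix.cons_val]
                rw [h5, add_assoc, h8]
                exact add_eq_zero_two.2 rfl
              have : cov ![s.2.1.1, s.2.1.2, s.2.2.1, s.2.2.2] = univ := by
                refine eq_univ_iff_forall.2 fun l => mem_event.2 fun i => ?_
                obtain ⟨l', -, h9, h10⟩ := rel_cover hz (mem_univ l) i
                exact ⟨l', h9, h10⟩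
              rw [this, card_univ, Fintype.card_fin]
          · obtain ⟨v, ⟨x, y⟩, z, w⟩ := s
            obtain ⟨v', ⟨x', y'⟩, z', w'⟩ := s'
            have h0 := congrFun heq 0
            have h1 := congrFun heq 1
            have h2 := congrFun heq 2
            have h3 := congrFun heq 3
            simp only [Matrix.cons_val] at h0 h1 h2 h3
            subst h0 h1 h2 h3
            have h4 := (hpairs.1 (mem_product.1 (mem_sigma.1 hs).2).1).2
            have h5 := (hpairs.1 (mem_product.1 (mem_sigma.1 hs').2).1).2
            simp only at h4 h5
            subst h4 h5
            rfl
  rw [le_div_iff₀ (by positivity)]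
  calc (#H : ℝ) * D ^ 2 = ∑ v ∈ H, D ^ 2 := by rw [sum_const, nsmul_eq_mul]
    _ ≤ ∑ v ∈ H, (mult X v : ℝ) ^ 2 := by
        refine sum_le_sum fun v hv => ?_
        have := hH v hv
        gcongr
    _ ≤ #Z := by exact_mod_cast hsum
    _ ≤ _ := hZ

lemma prob_heavy_le (X : Finset (Fin c → A)) {D : ℝ} (hD : 0 < D) :
    prob (fun T : Fin 2 → Fin c → A → (Fin b → ZMod 2) => ∃ x ∈ X, ∃ y ∈ X, x ≠ y ∧
      ∃ p, simpleTab (T p) x = simpleTab (T p) y ∧ D < mult X (phi x + phi y)) ≤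
      2 * (4 ^ (4 * (c + 1)) * √(#X : ℝ) ^ 4 / D ^ 2) / 2 ^ b := by
  classical
  let H : Finset (Fin c → A → ZMod 2) := {v | D ≤ mult X v}
  have hH := card_heavy_le X hD H fun v hv =>
    (mem_event (p := fun v => D ≤ mult X v)).1 hv
  have h1 := prob_systems_le (b := b) (P := Fin 2) H (fun p v _ => cvec p v) 1
  rw [pow_one, Fintype.card_fin] at h1
  refine (prob_mono ?_).trans (h1.trans ?_)
  · rintro T ⟨x, hx, y, hy, hne, p, heq, hlt⟩
    refine ⟨p, phi x + phi y,
      (mem_event (p := fun v => D ≤ mult X v)).2 hlt.le, fun S hS h0 => ?_, fun _ _ =>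
      hfull_cvec T p x y heq⟩
    rw [range_one, subset_singleton_iff] at hS
    rcases hS with rfl | rfl
    · rfl
    · rw [sum_singleton] at h0
      have h2 : phi x + phi y = 0 := by
        have := congrFun h0 p
        rwa [cvec, Pi.single_eq_same] at this
      refine absurd (phi_injective ?_) hne
      have h3 : phi y + phi y = 0 := add_eq_zero_two.2 rfl
      exact add_right_cancel (h2.trans h3.symm)
  · push_cast
    gcongr

end Probability

/-! ### Numerical bounds -/

section Final

variable {c b : ℕ} {A : Type*} [Fintype A] [DecidableEq A]

lemma Cert.one_le_and_le {G : Type*} {h : Fin 2 → (Fin c → A) → G} {X : Finset (Fin c → A)}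
    {M n : ℕ} {x : ℕ → Fin c → A} (hx : Cert h X M n x) : 1 ≤ M ∧ M ≤ #X := by
  obtain ⟨e, lo, t, s, -, ht, -, hX, hinj, -⟩ := hx
  refine ⟨by omega, ?_⟩
  have : #(range M) ≤ #X := card_le_card_of_injOn x (fun l hl => hX l (by simpa using hl))
    fun l hl l' hl' => hinj l (by simpa using hl) l' (by simpa using hl')
  simpa using this

/-- The union bound over the number `M` of keys involved. -/
lemma prob_exists_cert_le (X : Finset (Fin c → A)) (P : ℕ → (ℕ → Fin c → A) → Prop) (n : ℕ → ℕ)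
    (a : ℕ → ℝ) (ha : Summable a) (ha0 : ∀ M, 0 ≤ a M)
    (h : ∀ M, 1 ≤ M → prob (fun T : Fin 2 → Fin c → A → (Fin b → ZMod 2) =>
      ∃ x, P M x ∧ Cert (fun p => simpleTab (T p)) X M (n M) x) ≤ a M) :
    prob (fun T : Fin 2 → Fin c → A → (Fin b → ZMod 2) =>
      ∃ M x, P M x ∧ Cert (fun p => simpleTab (T p)) X M (n M) x) ≤ ∑' M, a M := by
  calc _ ≤ prob (fun T : Fin 2 → Fin c → A → (Fin b → ZMod 2) => ∃ M ∈ Icc 1 #X,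
          ∃ x, P M x ∧ Cert (fun p => simpleTab (T p)) X M (n M) x) := by
        apply prob_mono
        rintro T ⟨M, x, hP, hx⟩
        exact ⟨M, mem_Icc.2 hx.one_le_and_le, x, hP, hx⟩
    _ ≤ ∑ M ∈ Icc 1 #X, _ := prob_exists_le _ _
    _ ≤ ∑ M ∈ Icc 1 #X, a M := sum_le_sum fun M hM => h M (mem_Icc.1 hM).1
    _ ≤ ∑' M, a M := ha.sum_le_tsum _ fun M _ => ha0 M

lemma prob_eq_zero {E : (Fin 2 → Fin c → A → (Fin b → ZMod 2)) → Prop} (h : ∀ T, ¬ E T) :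
    prob E = 0 := by
  simp [prob, h]

/-- The series `∑ M, M ^ k * q ^ M`. -/
noncomputable def polyGeom (q : ℝ) (k : ℕ) : ℝ := ∑' M : ℕ, (M : ℝ) ^ k * q ^ M

lemma summable_polyGeom {q : ℝ} (hq0 : 0 < q) (hq1 : q < 1) (k : ℕ) :
    Summable fun M : ℕ => (M : ℝ) ^ k * q ^ M :=
  summable_pow_mul_geometric_of_norm_lt_one k (by rwa [Real.norm_of_nonneg hq0.le])

lemma polyGeom_nonneg {q : ℝ} (hq0 : 0 < q) (k : ℕ) : 0 ≤ polyGeom q k :=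
  tsum_nonneg fun M => by positivity

lemma pow_mul_sqrt_le {q g m r : ℝ} (hq0 : 0 < q) (hq1 : q < 1) (hr : 1 ≤ r) (hg : r ^ 3 = g)
    (hm0 : 0 ≤ m) (hm : m ≤ q * g) {M n β : ℕ} (hβ : β ≤ M) (hn : 2 * M + 1 ≤ 2 * n + β) :
    m ^ (M - β) * √m ^ β / g ^ n ≤ q ^ M / q ^ β / r := by
  have hg1 : 1 ≤ g := hg ▸ one_le_pow₀ hr
  have hs1 : 1 ≤ √g := Real.one_le_sqrt.2 hg1
  have hs2 : √g ^ 2 = g := Real.sq_sqrt (by linarith)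
  have hrs : r ≤ √g := by
    apply Real.le_sqrt_of_sq_le
    rw [← hg]
    exact pow_le_pow_right₀ hr (by norm_num)
  have hmg : m ≤ g := hm.trans (mul_le_of_le_one_left (by linarith) hq1.le)
  have hqβ : q ^ M / q ^ β = q ^ (M - β) := by
    rw [div_eq_iff (by positivity), ← pow_add, Nat.sub_add_cancel hβ]
  rw [hqβ, div_le_div_iff₀ (by positivity) (by positivity)]
  calc m ^ (M - β) * √m ^ β * r ≤ (q * g) ^ (M - β) * √g ^ β * √g := by gcongr
    _ = q ^ (M - β) * √g ^ (2 * (M - β) + β + 1) := by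
        rw [mul_pow, pow_add, pow_add, pow_mul, hs2, pow_one]; ring
    _ ≤ q ^ (M - β) * √g ^ (2 * n) := by
        gcongr
        omega
    _ = q ^ (M - β) * g ^ n := by rw [pow_mul, hs2]

lemma prob_exists_covers_le {q r : ℝ} (hq0 : 0 < q) (hq1 : q < 1) (hr : 1 ≤ r)
    (hg : r ^ 3 = 2 ^ b) (X : Finset (Fin c → A)) (hX : (#X : ℝ) ≤ q * 2 ^ b) (n : ℕ → ℕ) (β : ℕ)
    (hn : ∀ M, β ≤ M → 2 * M + 1 ≤ 2 * n M + β) :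
    prob (fun T : Fin 2 → Fin c → A → (Fin b → ZMod 2) =>
      ∃ M x, Covers x (range M) β ∧ Cert (fun p => simpleTab (T p)) X M (n M) x) ≤
      4 * polyGeom q (2 + β * (c + 1)) / q ^ β / r := by
  have key := prob_exists_cert_le (b := b) X (fun M x => Covers x (range M) β) n
    (fun M => 4 / q ^ β / r * ((M : ℝ) ^ (2 + β * (c + 1)) * q ^ M))
    ((summable_polyGeom hq0 hq1 _).mul_left _) (fun M => by positivity) fun M hM => ?_
  · refine key.trans (le_of_eq ?_)
    rw [tsum_mul_left, polyGeom]
    ring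
  · by_cases hβ : β ≤ M
    · refine (prob_covers_le X hM).trans ?_
      have h1 := pow_mul_sqrt_le hq0 hq1 hr hg (Nat.cast_nonneg #X) hX hβ (hn M hβ)
      calc _ = 4 * (M : ℝ) ^ (2 + β * (c + 1)) *
            ((#X : ℝ) ^ (M - β) * √(#X : ℝ) ^ β / ((2 : ℝ) ^ b) ^ n M) := by
            rw [pow_add]; ring
        _ ≤ 4 * (M : ℝ) ^ (2 + β * (c + 1)) * (q ^ M / q ^ β / r) := by gcongr
        _ = _ := by ring
    · rw [prob_eq_zero]
      · positivity
      · rintro T ⟨x, ⟨K, hK, hβK, -⟩, -⟩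
        have := card_le_card hK
        rw [card_range] at this
        omega

lemma prob_exists_light_le {q r : ℝ} (hq0 : 0 < q) (hq1 : q < 1) (hr : 1 ≤ r)
    (hg : r ^ 3 = 2 ^ b) (X : Finset (Fin c → A)) (hX : (#X : ℝ) ≤ q * 2 ^ b) :
    prob (fun T : Fin 2 → Fin c → A → (Fin b → ZMod 2) =>
      ∃ M x, LightCovers X (r ^ 2) x M ∧ Cert (fun p => simpleTab (T p)) X M (M - 3) x) ≤
      4 * polyGeom q (6 + 4 * (c + 1)) / q ^ 4 / r := by
  have key := prob_exists_cert_le (b := b) X (fun M x => LightCovers X (r ^ 2) x M)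
    (fun M => M - 3) (fun M => 4 / q ^ 4 / r * ((M : ℝ) ^ (6 + 4 * (c + 1)) * q ^ M))
    ((summable_polyGeom hq0 hq1 _).mul_left _) (fun M => by positivity) fun M hM => ?_
  · refine key.trans (le_of_eq ?_)
    rw [tsum_mul_left, polyGeom]
    ring
  · by_cases h6 : 6 ≤ M
    · refine (prob_light_le X (by positivity) hM).trans ?_
      obtain ⟨N, rfl⟩ := Nat.exists_eq_add_of_le h6
      have h1 : (#X : ℝ) ^ (6 + N - 6) * √(#X : ℝ) ^ 4 * r ^ 2 / ((2 : ℝ) ^ b) ^ (6 + N - 3) ≤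
          q ^ (6 + N) / q ^ 4 / r := by
        have hs : √(#X : ℝ) ^ 4 = (#X : ℝ) ^ 2 := by
          rw [show 4 = 2 * 2 from rfl, pow_mul, Real.sq_sqrt (Nat.cast_nonneg _)]
        have hq : q ^ (6 + N) / q ^ 4 = q ^ (N + 2) := by
          rw [div_eq_iff (by positivity), ← pow_add]; congr 1; ring
        rw [hs, hq, div_le_div_iff₀ (by positivity) (by positivity), Nat.add_sub_cancel_left,
          show 6 + N - 3 = N + 2 + 1 by omega, pow_succ ((2 : ℝ) ^ b), ← hg]
        rw [← hg] at hX
        calc (#X : ℝ) ^ N * (#X : ℝ) ^ 2 * r ^ 2 * r = (#X : ℝ) ^ (N + 2) * r ^ 3 := by ring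
          _ ≤ (q * r ^ 3) ^ (N + 2) * r ^ 3 := by gcongr
          _ = _ := by rw [mul_pow]; ring
      generalize 6 + N = M at *
      calc _ = 4 * (M : ℝ) ^ (6 + 4 * (c + 1)) *
            ((#X : ℝ) ^ (M - 6) * √(#X : ℝ) ^ 4 * r ^ 2 / ((2 : ℝ) ^ b) ^ (M - 3)) := by
            rw [pow_add]; ring
        _ ≤ 4 * (M : ℝ) ^ (6 + 4 * (c + 1)) * (q ^ M / q ^ 4 / r) := by gcongr
        _ = _ := by ring
    · rw [prob_eq_zero]
      · positivity
      · rintro T ⟨x, ⟨a, b', u, v, ha, hb, -, -, hab, -, -, -, -, -, -, K, hK, h4, -⟩, -⟩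
        have h1 := card_le_card hK
        rw [card_sdiff_of_subset, card_pair hab, card_range] at h1
        · omega
        · intro l hl
          rw [mem_insert, mem_singleton] at hl
          rw [mem_range]
          omega

/-- The constant in the bound on the failure probability, as a function of `q = 1 / (1 + ε)`. -/
noncomputable def failConst (q : ℝ) (c : ℕ) : ℝ :=
  4 * polyGeom q (2 + 0 * (c + 1)) / q ^ 0 + 4 * polyGeom q (2 + 6 * (c + 1)) / q ^ 6 +
    4 * polyGeom q (2 + 4 * (c + 1)) / q ^ 4 + 4 * polyGeom q (2 + 7 * (c + 1)) / q ^ 7 +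
    2 * 4 ^ (4 * (c + 1)) + 4 * polyGeom q (6 + 4 * (c + 1)) / q ^ 4

lemma failConst_nonneg {q : ℝ} (hq0 : 0 < q) (c : ℕ) : 0 ≤ failConst q c := by
  have := polyGeom_nonneg hq0
  unfold failConst
  have h1 := this (2 + 0 * (c + 1))
  have h2 := this (2 + 6 * (c + 1))
  have h3 := this (2 + 4 * (c + 1))
  have h4 := this (2 + 7 * (c + 1))
  have h5 := this (6 + 4 * (c + 1))
  positivity

/-- The threshold separating light from heavy sums is `g ^ (2 / 3)`, where `g = 2 ^ b`. -/
lemma prob_not_good_le {q r : ℝ} (hq0 : 0 < q) (hq1 : q < 1) (hr : 1 ≤ r)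
    (hg : r ^ 3 = 2 ^ b) (X : Finset (Fin c → A)) (hX : (#X : ℝ) ≤ q * 2 ^ b) :
    prob (fun T : Fin 2 → Fin c → A → (Fin b → ZMod 2) =>
      ¬ Good (fun p => simpleTab (T p)) X (r ^ 2)) ≤ failConst q c / r := by
  have h1 := prob_exists_covers_le hq0 hq1 hr hg X hX (fun M => M + 1) 0 (by omega)
  have h2 := prob_exists_covers_le hq0 hq1 hr hg X hX (fun M => M - 2) 6 (by omega)
  have h3 := prob_exists_covers_le hq0 hq1 hr hg X hX (fun M => M - 1) 4 (by omega)
  have h4 := prob_exists_covers_le hq0 hq1 hr hg X hX (fun M => M - 3) 7 (by omega)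
  have h5 := prob_heavy_le (b := b) X (show 0 < r ^ 2 by positivity)
  have h6 := prob_exists_light_le hq0 hq1 hr hg X hX
  have h5' : 2 * (4 ^ (4 * (c + 1)) * √(#X : ℝ) ^ 4 / (r ^ 2) ^ 2) / 2 ^ b ≤
      2 * 4 ^ (4 * (c + 1)) / r := by
    have hs : √(#X : ℝ) ^ 4 = (#X : ℝ) ^ 2 := by
      rw [show 4 = 2 * 2 from rfl, pow_mul, Real.sq_sqrt (Nat.cast_nonneg _)]
    have hm : (#X : ℝ) ≤ r ^ 3 := by
      rw [hg]
      exact hX.trans (mul_le_of_le_one_left (by positivity) hq1.le)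
    rw [hs, ← hg]
    calc _ ≤ 2 * (4 ^ (4 * (c + 1)) * (r ^ 3) ^ 2 / (r ^ 2) ^ 2) / r ^ 3 := by gcongr
      _ = _ := by field_simp
  rw [failConst, add_div, add_div, add_div, add_div, add_div]
  refine le_trans ?_ (add_le_add (add_le_add (add_le_add (add_le_add (add_le_add h1 h2) h3) h4)
    (h5.trans h5')) h6)
  refine le_trans (prob_mono fun T hT => ?_) ((prob_or_le _ _).trans (add_le_add_left
    ((prob_or_le _ _).trans (add_le_add_left ((prob_or_le _ _).trans (add_le_add_left
      ((prob_or_le _ _).trans (add_le_add_left (prob_or_le _ _) _)) _)) _)) _))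
  by_contra hcon
  simp only [not_or] at hcon
  obtain ⟨⟨⟨⟨⟨e1, e2⟩, e3⟩, e4⟩, e5⟩, e6⟩ := hcon
  refine hT ⟨fun M x hx => e1 ⟨M, x, ⟨∅, empty_subset _, le_rfl, by simp⟩, hx⟩,
    fun M x h hx => e2 ⟨M, x, h, hx⟩, fun M x h hx => e3 ⟨M, x, h, hx⟩,
    fun M x h hx => e4 ⟨M, x, h, hx⟩, fun x hx y hy hne p hp => ?_,
    fun M x h hx => e6 ⟨M, x, h, hx⟩⟩
  by_contra hlt
  exact e5 ⟨x, hx, y, hy, hne, p, hp, not_le.1 hlt⟩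

end Final

theorem stmt2 (ε : ℝ) (hε : 0 < ε) (c : ℕ) (hc : 1 ≤ c) :
    ∃ C' : ℝ, ∀ b : ℕ, 1 ≤ b → ∀ (A : Type) [Fintype A] [DecidableEq A],
      ∀ X : Finset (Fin c → A),
        2 * (1 + ε) * (X.card : ℝ) < 2 * 2 ^ b →
        1 - C' * ((2 : ℝ) * 2 ^ b) ^ (-(1 / 3) : ℝ) ≤
          (Nat.card {T : Fin 2 → Fin c → A → (Fin b → ZMod 2) //
              ∃ σ : (Fin c → A) → Fin 2,
                Set.InjOn (fun x => (simpleTab (T (σ x)) x, σ x)) ↑X} : ℝ) /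
            (Fintype.card (Fin 2 → Fin c → A → (Fin b → ZMod 2)) : ℝ) := by
  set q : ℝ := 1 / (1 + ε) with hq
  have hq0 : 0 < q := by positivity
  have hq1 : q < 1 := by rw [hq, div_lt_one (by positivity)]; linarith
  refine ⟨2 * failConst q c, fun b _ A _ _ X hX => ?_⟩
  classical
  set r : ℝ := ((2 : ℝ) ^ b) ^ (1 / 3 : ℝ) with hr
  have hr1 : 1 ≤ r := Real.one_le_rpow (one_le_pow₀ (by norm_num)) (by norm_num)
  have hr3 : r ^ 3 = 2 ^ b := by
    rw [hr, ← Real.rpow_natCast, ← Real.rpow_mul (by positivity)]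
    norm_num
  have hXq : (#X : ℝ) ≤ q * 2 ^ b := by
    rw [hq, one_div, inv_mul_eq_div, le_div_iff₀ (by positivity)]
    linarith
  have hbad := prob_not_good_le hq0 hq1 hr1 hr3 X hXq
  have hconst : failConst q c / r ≤ 2 * failConst q c * ((2 : ℝ) * 2 ^ b) ^ (-(1 / 3) : ℝ) := by
    have h1 : 1 / r ≤ 2 * ((2 : ℝ) * 2 ^ b) ^ (-(1 / 3) : ℝ) := by
      rw [Real.rpow_neg (by positivity), Real.mul_rpow (by norm_num) (by positivity), ← hr,
        ← div_eq_mul_inv, div_le_div_iff₀ (by positivity) (by positivity), one_mul]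
      gcongr
      calc (2 : ℝ) ^ (1 / 3 : ℝ) ≤ 2 ^ (1 : ℝ) :=
            Real.rpow_le_rpow_of_exponent_le (by norm_num) (by norm_num)
        _ = 2 := Real.rpow_one 2
    calc failConst q c / r = failConst q c * (1 / r) := by ring
      _ ≤ failConst q c * (2 * ((2 : ℝ) * 2 ^ b) ^ (-(1 / 3) : ℝ)) := by
          gcongr
          exact failConst_nonneg hq0 c
      _ = _ := by ring
  refine le_trans (sub_le_sub_left (hbad.trans hconst) 1) ?_
  rw [Nat.subtype_card (@filter _ (fun T : Fin 2 → Fin c → A → (Fin b → ZMod 2) =>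
    ∃ σ : (Fin c → A) → Fin 2, Set.InjOn (fun x => (simpleTab (T (σ x)) x, σ x)) X)
    (Classical.decPred _) univ) fun T => mem_event]
  have hcardpos : (0 : ℝ) < Fintype.card (Fin 2 → Fin c → A → (Fin b → ZMod 2)) := by
    exact_mod_cast Fintype.card_pos
  rw [sub_le_iff_le_add, prob, ← add_div, le_div_iff₀ hcardpos, one_mul, ← Nat.cast_add,
    Nat.cast_le, ← card_univ]
  refine le_trans (card_le_card fun T _ => ?_) (card_union_le _ _)
  by_cases hT : Good (fun p => simpleTab (T p)) X (r ^ 2)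
  · exact mem_union_left _ (mem_event.2 (hT.exists_placement hc))
  · exact mem_union_right _ (mem_event.2 hT)
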